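/- arXiv:1903.03834 — 11 statements merged into one kernel-verified Lean document; each statement's English description precedes it below -/
import Mathlib

section
/- Let I and J be open real intervals and let p : I → J be a continuous, strictly increasing surjection that can be written on I as the difference of two convex functions. If ũ : J → ℝ can be written as the difference of two convex functions on J, then the composition u = ũ ∘ p can be written as the difference of two convex functions on I. -/
/-!
The right derivative of a convex function is monotone and integrates back to the function, while
`x ↦ ∫ t in c..x, m t` is convex for every monotone `m`. So it suffices to write the right
derivative of the composition as a combination of monotone functions.

By linearity the outer function may be taken to be a convex `F`. Fix a base point `c ∈ I` and
write `p = g₁ - g₂ + k x` with `g₁`, `g₂` convex. Subtracting affine functions, arrange that the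
right derivatives `F'`, `g₁'`, `g₂'` vanish at `p c`, `c`, `c` respectively. As `p` is strictly
increasing, the chain rule holds for right derivatives: `(F ∘ p)' = f * (g₁' - g₂' + k)`, where
`f = F' ∘ p` is monotone. The functions `f`, `g₁'`, `g₂'` are all nonnegative to the right of `c`
and nonpositive to its left, hence `f * gᵢ'` is monotone on the right and antitone on the left of
`c`. Grouping `f * g₁'` on the right with `-(f * g₂')` on the left, and vice versa, exhibits
`f * (g₁' - g₂')` as a difference of two monotone functions (`monotoneOn_ite_mul`).
-/

open Set Filter Topology MeasureTheory

/-- `g` is the difference of two convex functions on `s`. -/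
def IsDiffOfConvexOn (s : Set ℝ) (g : ℝ → ℝ) : Prop :=
  ∃ g₁ g₂ : ℝ → ℝ, ConvexOn ℝ s g₁ ∧ ConvexOn ℝ s g₂ ∧ ∀ x ∈ s, g x = g₁ x - g₂ x

lemma IsDiffOfConvexOn.add {s : Set ℝ} {f g : ℝ → ℝ} (hf : IsDiffOfConvexOn s f)
    (hg : IsDiffOfConvexOn s g) : IsDiffOfConvexOn s (fun x => f x + g x) := by
  obtain ⟨f₁, f₂, h₁, h₂, h⟩ := hf
  obtain ⟨g₁, g₂, h₁', h₂', h'⟩ := hg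
  refine ⟨f₁ + g₁, f₂ + g₂, h₁.add h₁', h₂.add h₂', fun x hx => ?_⟩
  simp only [Pi.add_apply, h x hx, h' x hx]
  ring

lemma IsDiffOfConvexOn.neg {s : Set ℝ} {f : ℝ → ℝ} (hf : IsDiffOfConvexOn s f) :
    IsDiffOfConvexOn s (fun x => -f x) := by
  obtain ⟨f₁, f₂, h₁, h₂, h⟩ := hf
  refine ⟨f₂, f₁, h₂, h₁, fun x hx => ?_⟩
  simp only [h x hx]
  ring

lemma IsDiffOfConvexOn.const_mul {s : Set ℝ} {f : ℝ → ℝ} (hf : IsDiffOfConvexOn s f) (k : ℝ) :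
    IsDiffOfConvexOn s (fun x => k * f x) := by
  wlog hk : 0 ≤ k generalizing k
  · simpa using (this (-k) (by linarith)).neg
  obtain ⟨f₁, f₂, h₁, h₂, h⟩ := hf
  refine ⟨fun x => k * f₁ x, fun x => k * f₂ x, h₁.smul hk, h₂.smul hk, fun x hx => ?_⟩
  simp only [h x hx]
  ring

lemma IsDiffOfConvexOn.congr {s : Set ℝ} {f g : ℝ → ℝ} (hf : IsDiffOfConvexOn s f)
    (h : ∀ x ∈ s, g x = f x) : IsDiffOfConvexOn s g := by
  obtain ⟨f₁, f₂, h₁, h₂, h'⟩ := hf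
  exact ⟨f₁, f₂, h₁, h₂, fun x hx => (h x hx).trans (h' x hx)⟩

lemma intervalIntegrable_of_monotoneOn {I : Set ℝ} (hI : I.OrdConnected) {m : ℝ → ℝ}
    (hm : MonotoneOn m I) {a b : ℝ} (ha : a ∈ I) (hb : b ∈ I) :
    IntervalIntegrable m volume a b :=
  (hm.mono (hI.uIcc_subset ha hb)).intervalIntegrable

/-- The integral of a monotone function `m` lies above its line of slope `m y` through `y`. -/
lemma mul_sub_le_integral {I : Set ℝ} (hI : I.OrdConnected) {m : ℝ → ℝ}
    (hm : MonotoneOn m I) {y x : ℝ} (hy : y ∈ I) (hx : x ∈ I) :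
    m y * (x - y) ≤ ∫ t in y..x, m t := by
  rcases le_total y x with h | h
  · have := intervalIntegral.integral_mono_on (μ := volume) (f := fun _ => m y) h (by simp)
      (intervalIntegrable_of_monotoneOn hI hm hy hx)
      (fun t ht => hm hy (hI.out hy hx ht) ht.1)
    simp only [intervalIntegral.integral_const, smul_eq_mul] at this
    linarith
  · have := intervalIntegral.integral_mono_on (μ := volume) (g := fun _ => m y) h
      (intervalIntegrable_of_monotoneOn hI hm hx hy) (by simp)
      (fun t ht => hm (hI.out hx hy ht) hy ht.2)
    simp only [intervalIntegral.integral_const, smul_eq_mul] at this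
    rw [intervalIntegral.integral_symm]
    linarith

lemma convexOn_integral {I : Set ℝ} (hI : I.OrdConnected) {m : ℝ → ℝ}
    (hm : MonotoneOn m I) {c : ℝ} (hc : c ∈ I) :
    ConvexOn ℝ I (fun x => ∫ t in c..x, m t) := by
  refine ⟨hI.convex, fun x hx y hy a b ha hb hab => ?_⟩
  have hz : a • x + b • y ∈ I := hI.convex hx hy ha hb hab
  set z := a • x + b • y with hzdef
  -- Average the two support inequalities at the intermediate point `z`.
  have key : ∀ w ∈ I, m z * (w - z) ≤ (∫ t in c..w, m t) - ∫ t in c..z, m t := by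
    intro w hw
    rw [intervalIntegral.integral_interval_sub_left
      (intervalIntegrable_of_monotoneOn hI hm hc hw)
      (intervalIntegrable_of_monotoneOn hI hm hc hz)]
    exact mul_sub_le_integral hI hm hz hw
  have hX := mul_le_mul_of_nonneg_left (key x hx) ha
  have hY := mul_le_mul_of_nonneg_left (key y hy) hb
  simp only [smul_eq_mul] at hzdef ⊢
  have e : a * (m z * (x - z)) + b * (m z * (y - z)) = 0 := by
    have : a * (m z * (x - z)) + b * (m z * (y - z))
        = m z * (a * x + b * y - (a + b) * z) := by ring
    rw [this, hab, hzdef]; ring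
  have e2 : (∫ t in c..z, m t) = a * (∫ t in c..z, m t) + b * (∫ t in c..z, m t) := by
    rw [← add_mul, hab, one_mul]
  rw [e2]
  linarith

lemma isDiffOfConvexOn_integral {I : Set ℝ} (hI : I.OrdConnected) {m : ℝ → ℝ}
    (hm : MonotoneOn m I) {c : ℝ} (hc : c ∈ I) :
    IsDiffOfConvexOn I (fun x => ∫ t in c..x, m t) :=
  ⟨_, fun _ => 0, convexOn_integral hI hm hc, convexOn_const 0 hI.convex, fun x _ => by simp⟩

/-- Subtracting an affine function from a convex function makes its right derivative vanish at a
prescribed point `c`. -/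
lemma exists_normalized {I : Set ℝ} (hIo : IsOpen I) {G : ℝ → ℝ} (hG : ConvexOn ℝ I G)
    (c : ℝ) :
    ∃ (k : ℝ) (g : ℝ → ℝ), MonotoneOn g I ∧ g c = 0 ∧
      (∀ x ∈ I, HasDerivWithinAt (fun t => G t - k * t) (g x) (Ioi x) x) ∧
      ContinuousOn G I := by
  have hmono := hG.monotoneOn_rightDeriv
  have hcont := hG.continuousOn_interior
  rw [hIo.interior_eq] at hmono hcont
  refine ⟨derivWithin G (Ioi c) c,
    fun x => derivWithin G (Ioi x) x - derivWithin G (Ioi c) c, ?_, by simp, ?_, hcont⟩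
  · intro x hx y hy hxy
    exact sub_le_sub_right (hmono hx hy hxy) _
  · intro x hx
    have h := hG.hasDerivWithinAt_rightDeriv_of_mem_interior (by rwa [hIo.interior_eq])
    have hsub := h.sub ((hasDerivWithinAt_id x (Ioi x)).const_mul (derivWithin G (Ioi c) c))
    rw [mul_one] at hsub
    exact hsub

/-- For monotone `f`, `g`, `h` vanishing at `c`, the products `f * g` and `f * h` are nonnegative,
monotone to the right of `c` and antitone to its left, so flipping the sign on the left of `c`
gives a monotone function. -/
lemma monotoneOn_ite_mul {I : Set ℝ} {f g h : ℝ → ℝ} {c : ℝ} (hc : c ∈ I)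
    (hf : MonotoneOn f I) (hg : MonotoneOn g I) (hh : MonotoneOn h I)
    (hfc : f c = 0) (hgc : g c = 0) (hhc : h c = 0) :
    MonotoneOn (fun x => if c ≤ x then f x * g x else -(f x * h x)) I := by
  intro x hx y hy hxy
  have hfxy := hf hx hy hxy
  have hgxy := hg hx hy hxy
  have hhxy := hh hx hy hxy
  by_cases h1 : c ≤ x
  · have f1 := hf hc hx h1
    have g1 := hg hc hx h1
    rw [hfc] at f1
    rw [hgc] at g1
    simp only [h1, h1.trans hxy, if_true]
    nlinarith
  · have f1 := hf hx hc (not_le.1 h1).le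
    have h1' := hh hx hc (not_le.1 h1).le
    rw [hfc] at f1
    rw [hhc] at h1'
    by_cases h2 : c ≤ y
    · have f2 := hf hc hy h2
      have g2 := hg hc hy h2
      rw [hfc] at f2
      rw [hgc] at g2
      simp only [h1, h2, if_true, if_false]
      nlinarith [mul_nonneg f2 g2, mul_nonneg_of_nonpos_of_nonpos f1 h1']
    · have f2 := hf hy hc (not_le.1 h2).le
      have h2' := hh hy hc (not_le.1 h2).le
      rw [hfc] at f2
      rw [hhc] at h2'
      simp only [h1, h2, if_false]
      nlinarith

/-- The case of a convex outer function. -/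
lemma isDiffOfConvexOn_convex_comp {I J : Set ℝ} (hIo : IsOpen I) (hI : I.OrdConnected)
    (hJo : IsOpen J) {p : ℝ → ℝ} (hpcont : ContinuousOn p I) (hpmono : StrictMonoOn p I)
    (hpJ : MapsTo p I J) (hpDC : IsDiffOfConvexOn I p) {F : ℝ → ℝ} (hF : ConvexOn ℝ J F) :
    IsDiffOfConvexOn I (fun x => F (p x)) := by
  rcases I.eq_empty_or_nonempty with rfl | ⟨c, hc⟩
  · exact ⟨0, 0, ⟨convex_empty, by simp⟩, ⟨convex_empty, by simp⟩, by simp⟩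
  have hpDC' := hpDC
  obtain ⟨G₁, G₂, hG₁, hG₂, hp⟩ := hpDC
  obtain ⟨k₁, g₁, m₁, z₁, d₁, -⟩ := exists_normalized hIo hG₁ c
  obtain ⟨k₂, g₂, m₂, z₂, d₂, -⟩ := exists_normalized hIo hG₂ c
  obtain ⟨k, φ, mφ, zφ, dφ, cF⟩ := exists_normalized hJo hF (p c)
  set f : ℝ → ℝ := fun x => φ (p x) with hfdef
  have mf : MonotoneOn f I := fun x hx y hy hxy =>
    mφ (hpJ hx) (hpJ hy) (hpmono.monotoneOn hx hy hxy)
  have mA := monotoneOn_ite_mul hc mf m₁ m₂ zφ z₁ z₂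
  have mB := monotoneOn_ite_mul hc mf m₂ m₁ zφ z₂ z₁
  set A : ℝ → ℝ := fun x => if c ≤ x then f x * g₁ x else -(f x * g₂ x) with hA
  set B : ℝ → ℝ := fun x => if c ≤ x then f x * g₂ x else -(f x * g₁ x) with hB
  have hAB : ∀ x, f x * (g₁ x - g₂ x + (k₁ - k₂)) = A x - B x + (k₁ - k₂) * f x := by
    intro x
    simp only [hA, hB]
    split_ifs <;> ring
  have dp : ∀ x ∈ I, HasDerivWithinAt p (g₁ x - g₂ x + (k₁ - k₂)) (Ioi x) x := by
    intro x hx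
    have h := ((d₁ x hx).sub (d₂ x hx)).add
      ((hasDerivWithinAt_id x (Ioi x)).const_mul (k₁ - k₂))
    rw [mul_one] at h
    refine h.congr_of_eventuallyEq ?_ ?_
    · filter_upwards [mem_nhdsWithin_of_mem_nhds (hIo.mem_nhds hx)] with t ht
      simp only [Pi.add_apply, Pi.sub_apply, id, hp t ht]
      ring
    · simp only [Pi.add_apply, Pi.sub_apply, id, hp x hx]
      ring
  have du : ∀ x ∈ I, HasDerivWithinAt (fun x => F (p x) - k * p x)
      (A x - B x + (k₁ - k₂) * f x) (Ioi x) x := by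
    intro x hx
    rw [← hAB]
    -- Strict monotonicity sends points of `I` right of `x` to points right of `p x`.
    have h := (dφ (p x) (hpJ hx)).comp x ((dp x hx).mono (inter_subset_left (t := I)))
      (fun t ht => hpmono hx ht.2 ht.1)
    exact (hasDerivWithinAt_inter (hIo.mem_nhds hx)).1 h
  have cu : ContinuousOn (fun x => F (p x) - k * p x) I :=
    (cF.comp hpcont hpJ).sub (continuousOn_const.mul hpcont)
  have hu : ∀ x ∈ I, F (p x) - k * p x = (F (p c) - k * p c)
      + ((∫ t in c..x, A t) - (∫ t in c..x, B t) + (k₁ - k₂) * ∫ t in c..x, f t) := by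
    intro x hx
    have iA := intervalIntegrable_of_monotoneOn hI mA hc hx
    have iB := intervalIntegrable_of_monotoneOn hI mB hc hx
    have jf := intervalIntegrable_of_monotoneOn hI mf hc hx
    have hsub := hI.uIcc_subset hc hx
    have h := intervalIntegral.integral_eq_sub_of_hasDeriv_right (cu.mono hsub)
      (fun t ht => du t (hsub (Ioo_subset_Icc_self ht)))
      ((iA.sub iB).add (jf.const_mul (k₁ - k₂)))
    rw [intervalIntegral.integral_add (iA.sub iB) (jf.const_mul _),
      intervalIntegral.integral_sub iA iB, intervalIntegral.integral_const_mul] at h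
    linarith
  have hconst : IsDiffOfConvexOn I (fun _ => F (p c) - k * p c) :=
    ⟨_, fun _ => 0, convexOn_const _ hI.convex, convexOn_const 0 hI.convex,
      fun x _ => (sub_zero _).symm⟩
  have hfin := ((((isDiffOfConvexOn_integral hI mA hc).add
    (isDiffOfConvexOn_integral hI mB hc).neg).add
    ((isDiffOfConvexOn_integral hI mf hc).const_mul (k₁ - k₂))).add hconst).add
    (hpDC'.const_mul k)
  refine hfin.congr fun x hx => ?_
  have := hu x hx
  linarith

theorem stmt_0 (I J : Set ℝ) (hIopen : IsOpen I) (hIconn : I.OrdConnected)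
    (hJopen : IsOpen J) (hJconn : J.OrdConnected)
    (p : ℝ → ℝ) (hpcont : ContinuousOn p I) (hpmono : StrictMonoOn p I)
    (hpsurj : p '' I = J) (hpDC : IsDiffOfConvexOn I p)
    (ut : ℝ → ℝ) (hut : IsDiffOfConvexOn J ut) :
    IsDiffOfConvexOn I (ut ∘ p) := by
  have hpJ : MapsTo p I J := fun x hx => hpsurj ▸ mem_image_of_mem p hx
  obtain ⟨F₁, F₂, h₁, h₂, h⟩ := hut
  refine ((isDiffOfConvexOn_convex_comp hIopen hIconn hJopen hpcont hpmono hpJ hpDC h₁).add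
    (isDiffOfConvexOn_convex_comp hIopen hIconn hJopen hpcont hpmono hpJ hpDC h₂).neg).congr
    fun x hx => ?_
  rw [Function.comp_apply, h _ (hpJ hx), sub_eq_add_neg]
end

section
/- Let I and J be open real intervals and let p : I → J be a continuous, strictly increasing surjection that can be written on I as the difference of two convex functions, and let ũ : J → ℝ be a difference of two convex functions on J. Then for every x ∈ I, lim_{ε↓0} (ũ(p(x)) − ũ(p(x−ε)))/(p(x) − p(x−ε)) = ũ₋′(p(x)); consequently the left derivative of u = ũ ∘ p exists at every x ∈ I and equals u₋′(x) = ũ₋′(p(x)) · p₋′(x). -/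
/-!
A one-sided chain rule. Since `p` is continuous and strictly increasing, the increment
`p x - p (x - ε)` tends to `0` from above as `ε ↓ 0`, so composing with it turns the left difference
quotient of `ut` at `p x` into the first limit. As the increment never vanishes, multiplying by
the left difference quotient of `p` gives the left derivative of `ut ∘ p`.
-/

open Set Filter Topology MeasureTheory

theorem stmt_1 (I J : Set ℝ) (hIopen : IsOpen I) (hIconn : I.OrdConnected)
    (hJopen : IsOpen J) (hJconn : J.OrdConnected)
    (p : ℝ → ℝ) (hpcont : ContinuousOn p I) (hpmono : StrictMonoOn p I)
    (hpsurj : p '' I = J) (hpDC : IsDiffOfConvexOn I p)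
    (ut : ℝ → ℝ) (hut : IsDiffOfConvexOn J ut)
    (dut dp : ℝ → ℝ)
    (hdut : ∀ q ∈ J, Tendsto (fun ε => (ut q - ut (q - ε)) / ε) (𝓝[>] (0 : ℝ)) (𝓝 (dut q)))
    (hdp : ∀ x ∈ I, Tendsto (fun ε => (p x - p (x - ε)) / ε) (𝓝[>] (0 : ℝ)) (𝓝 (dp x))) :
    ∀ x ∈ I,
      Tendsto (fun ε => (ut (p x) - ut (p (x - ε))) / (p x - p (x - ε))) (𝓝[>] (0 : ℝ))
        (𝓝 (dut (p x))) ∧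
      Tendsto (fun ε => (ut (p x) - ut (p (x - ε))) / ε) (𝓝[>] (0 : ℝ))
        (𝓝 (dut (p x) * dp x)) := by
  intro x hx
  have hsub : Tendsto (fun ε : ℝ => x - ε) (𝓝[>] 0) (𝓝 x) := by
    have : Tendsto (fun ε : ℝ => x - ε) (𝓝 0) (𝓝 (x - 0)) := tendsto_id.const_sub x
    simpa using this.mono_left nhdsWithin_le_nhds
  have hpos : ∀ᶠ ε in 𝓝[>] (0 : ℝ), 0 < p x - p (x - ε) := by
    filter_upwards [hsub.eventually_mem (hIopen.mem_nhds hx), self_mem_nhdsWithin] with ε hε h0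
    exact sub_pos.2 (hpmono hε hx (sub_lt_self x h0))
  -- The increment `δ = p x - p (x - ε)` tends to `0` through positive values, so it may be
  -- substituted for the step in the left difference quotient of `ut` at `p x`.
  have hδ : Tendsto (fun ε => p x - p (x - ε)) (𝓝[>] 0) (𝓝[>] 0) := by
    refine tendsto_nhdsWithin_iff.2 ⟨?_, hpos⟩
    simpa using ((hpcont.continuousAt (hIopen.mem_nhds hx)).tendsto.comp hsub).const_sub (p x)
  have hquot : Tendsto (fun ε => (ut (p x) - ut (p (x - ε))) / (p x - p (x - ε))) (𝓝[>] 0)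
      (𝓝 (dut (p x))) := by
    simpa [Function.comp_def] using
      (hdut (p x) (hpsurj ▸ mem_image_of_mem p hx)).comp hδ
  refine ⟨hquot, (hquot.mul (hdp x hx)).congr' ?_⟩
  filter_upwards [hpos] with ε hε
  exact div_mul_div_cancel₀ hε.ne'
end

section
/- Let I and J be open real intervals and let p : I → J be a continuous, strictly increasing surjection that can be written on I as the difference of two convex functions, with left derivative p₋′. Let ũ : J → ℝ be continuously differentiable with derivative ũ′ satisfying ũ′(q̄) − ũ′(q̲) = ∫_{q̲}^{q̄} h(q) dq for all q̲ < q̄ in J, for some locally integrable function h : J → ℝ. Then for all x̲ < x̄ in I, ũ′(p(x̄)) − ũ′(p(x̲)) = ∫_{x̲}^{x̄} h(p(x)) · p₋′(x) dx. -/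
/-!
The statement is the change of variables `q = p x` in the integral of `h` over `[p x₁, p x₂]`.
Convex functions are locally Lipschitz on open sets, so `p` is Lipschitz on `[x₁, x₂]`. Hence `p` is
differentiable off a null set `N`, and it maps `N` to a null set. On the remaining set `S` the
function `p` is injective and its derivative, which equals the left derivative, is nonnegative, so
the change of variables formula gives `∫_{p '' S} h = ∫_S (h ∘ p) · p'`. Since `p '' [x₁, x₂]` is
`[p x₁, p x₂]`, discarding the null sets `N` and `p '' N` from the two domains gives the claim.
-/

open Set Filter Topology MeasureTheory

/-- A difference of convex functions on an open set is Lipschitz on compact subsets. -/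
lemma IsDiffOfConvexOn.exists_lipschitzOnWith {s t : Set ℝ} {g : ℝ → ℝ}
    (hg : IsDiffOfConvexOn s g) (hs : IsOpen s) (ht : IsCompact t) (hts : t ⊆ s) :
    ∃ K, LipschitzOnWith K g t := by
  obtain ⟨g₁, g₂, h₁, h₂, hgg⟩ := hg
  obtain ⟨K₁, hK₁⟩ :=
    ((h₁.locallyLipschitzOn hs).mono hts).exists_lipschitzOnWith_of_compact ht
  obtain ⟨K₂, hK₂⟩ :=
    ((h₂.locallyLipschitzOn hs).mono hts).exists_lipschitzOnWith_of_compact ht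
  refine ⟨K₁ + K₂, fun x hx y hy => ?_⟩
  rw [hgg x (hts hx), hgg y (hts hy)]
  exact (hK₁.sub hK₂) hx hy

/-- Lipschitz functions map null sets of reals to null sets. -/
lemma LipschitzOnWith.volume_image_eq_zero {K : NNReal} {t N : Set ℝ} {g : ℝ → ℝ}
    (hg : LipschitzOnWith K g t) (hN : N ⊆ t) (h0 : volume N = 0) : volume (g '' N) = 0 := by
  have := (hg.mono hN).hausdorffMeasure_image_le (d := 1) zero_le_one
  simpa [hausdorffMeasure_real, h0] using this

theorem stmt_2 (I J : Set ℝ) (hIopen : IsOpen I) (hIconn : I.OrdConnected)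
    (hJopen : IsOpen J) (hJconn : J.OrdConnected)
    (p : ℝ → ℝ) (hpcont : ContinuousOn p I) (hpmono : StrictMonoOn p I)
    (hpsurj : p '' I = J) (hpDC : IsDiffOfConvexOn I p)
    (dp : ℝ → ℝ)
    (hdp : ∀ x ∈ I, Tendsto (fun ε => (p x - p (x - ε)) / ε) (𝓝[>] (0 : ℝ)) (𝓝 (dp x)))
    (ut dut : ℝ → ℝ)
    (hut : ∀ q ∈ J, HasDerivAt ut (dut q) q)
    (hdutcont : ContinuousOn dut J)
    (h : ℝ → ℝ)
    (hloc : ∀ q₁ ∈ J, ∀ q₂ ∈ J, q₁ < q₂ → IntervalIntegrable h volume q₁ q₂)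
    (hftc : ∀ q₁ ∈ J, ∀ q₂ ∈ J, q₁ < q₂ → dut q₂ - dut q₁ = ∫ q in q₁..q₂, h q) :
    ∀ x₁ ∈ I, ∀ x₂ ∈ I, x₁ < x₂ →
      dut (p x₂) - dut (p x₁) = ∫ x in x₁..x₂, h (p x) * dp x := by
  intro x₁ hx₁ x₂ hx₂ hlt
  have hsub : Icc x₁ x₂ ⊆ I := hIconn.out hx₁ hx₂
  have hplt : p x₁ < p x₂ := hpmono hx₁ hx₂ hlt
  rw [hftc _ (hpsurj ▸ mem_image_of_mem p hx₁) _ (hpsurj ▸ mem_image_of_mem p hx₂) hplt,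
    intervalIntegral.integral_of_le hlt.le, intervalIntegral.integral_of_le hplt.le,
    ← integral_Icc_eq_integral_Ioc, ← integral_Icc_eq_integral_Ioc]
  obtain ⟨K, hK⟩ := hpDC.exists_lipschitzOnWith hIopen isCompact_Icc hsub
  have hpm : StrictMonoOn p (Icc x₁ x₂) := hpmono.mono hsub
  set S : Set ℝ := Icc x₁ x₂ ∩ {x | DifferentiableAt ℝ p x} with hS
  have hSsub : S ⊆ Icc x₁ x₂ := inter_subset_left
  have hSmeas : MeasurableSet S :=
    measurableSet_Icc.inter (measurableSet_of_differentiableAt ℝ p)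
  have hN : volume (Icc x₁ x₂ \ S) = 0 := by
    have hae := (hpmono.monotoneOn).ae_differentiableWithinAt_of_mem
    rw [ae_iff] at hae
    refine measure_mono_null (fun x hx => ?_) hae
    intro hd
    exact hx.2 ⟨hx.1, (hd (hsub hx.1)).differentiableAt (hIopen.mem_nhds (hsub hx.1))⟩
  have himage : p '' Icc x₁ x₂ = Icc (p x₁) (p x₂) := by
    refine Subset.antisymm ?_ (intermediate_value_Icc hlt.le (hpcont.mono hsub))
    exact hpm.monotoneOn.image_Icc_subset
  have hpN : volume (Icc (p x₁) (p x₂) \ p '' S) = 0 := by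
    rw [← himage, ← hpm.injOn.image_sdiff_subset hSsub]
    exact hK.volume_image_eq_zero sdiff_subset hN
  have hdpS : ∀ x ∈ S, HasDerivAt p (dp x) x := by
    intro x hx
    have hd : HasDerivAt p (deriv p x) x := hx.2.hasDerivAt
    -- The left difference quotient is `slope p x (x - ε)`.
    have hlim : Tendsto (fun ε : ℝ => x - ε) (𝓝[>] (0 : ℝ)) (𝓝[≠] x) := by
      refine tendsto_nhdsWithin_iff.2 ⟨?_, ?_⟩
      · have : Tendsto (fun ε : ℝ => x - ε) (𝓝 0) (𝓝 (x - 0)) :=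
          (continuous_const.sub continuous_id).tendsto 0
        rw [sub_zero] at this
        exact this.mono_left nhdsWithin_le_nhds
      · filter_upwards [self_mem_nhdsWithin] with ε hε
        have : (0 : ℝ) < ε := hε
        simp [this.ne']
    have heq : deriv p x = dp x := by
      refine tendsto_nhds_unique ((hd.tendsto_slope.comp hlim).congr' ?_) (hdp x (hsub hx.1))
      filter_upwards [self_mem_nhdsWithin] with ε hε
      simp only [Function.comp, slope_def_field]
      rw [sub_sub_cancel_left, div_neg, ← neg_div, neg_sub]
    exact heq ▸ hd
  have hdp0 : ∀ x ∈ S, 0 ≤ dp x := by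
    intro x hx
    refine ge_of_tendsto (hdp x (hsub hx.1)) ?_
    have hnear : ∀ᶠ ε in 𝓝[>] (0 : ℝ), x - ε ∈ I := by
      have : Tendsto (fun ε : ℝ => x - ε) (𝓝 0) (𝓝 (x - 0)) :=
        (continuous_const.sub continuous_id).tendsto 0
      rw [sub_zero] at this
      exact (this.mono_left nhdsWithin_le_nhds) (hIopen.mem_nhds (hsub hx.1))
    filter_upwards [self_mem_nhdsWithin, hnear] with ε hε hεI
    have hε0 : (0 : ℝ) < ε := hε
    refine div_nonneg (sub_nonneg.2 ?_) hε0.le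
    exact hpmono.monotoneOn hεI (hsub hx.1) (by linarith)
  have hcov := integral_image_eq_integral_abs_deriv_smul hSmeas
    (fun x hx => (hdpS x hx).hasDerivWithinAt) (hpm.injOn.mono hSsub) h
  have e₁ : (S : Set ℝ) =ᵐ[volume] Icc x₁ x₂ :=
    hSsub.eventuallyLE.antisymm (ae_le_set.2 hN)
  have e₂ : (p '' S : Set ℝ) =ᵐ[volume] Icc (p x₁) (p x₂) :=
    (himage ▸ image_mono hSsub : p '' S ⊆ Icc (p x₁) (p x₂)).eventuallyLE.antisymm
      (ae_le_set.2 hpN)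
  rw [← setIntegral_congr_set e₁, ← setIntegral_congr_set e₂, hcov]
  refine setIntegral_congr_fun hSmeas fun x hx => ?_
  simp only [abs_of_nonneg (hdp0 x hx), smul_eq_mul, mul_comm]
end

section
/- Suppose β ∈ (−1,0) and (n−1)(1−β) − 2mβ ≥ 0. Then the function x ↦ ψ(x;z) is convex on (0,∞). -/
/-!
Both branches of `ψ(·;z)` are convex where they are used, and at the junction `z` the derivative
jumps upwards, so the two branches glue to a convex function.

* Left branch: the quadratic is negative at `0` and at `1` (the latter because `b < r`), hence on
  `[0, 1]`, so `n > 1` and `x ^ n` is convex.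
* Right branch: the second derivative is `x ^ (m - 2) * (A n (n - 1) x ^ (n - m) + B m (m - 1))`.
  As `A ≥ 0` and `n > 1`, the bracket is nondecreasing in `x`, and at `x = z` it equals
  `n z ^ (n - m) ((n - 1) (1 - β) - 2 m β) / (1 + β) ≥ 0`.
* Junction: the right derivative at `z` is `(1 - β) / (1 + β)` times the left derivative
  `n z ^ (n - 1)`, and this factor exceeds `1` because
  `β < 0`.

`convexOn_of_glue` is the gluing criterion; the upward jump enters as the existence of a line
supporting both branches at the junction.
-/

open Set Filter Topology

noncomputable section

/-- The coefficient `A`. -/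
def Acoef (n m beta : ℝ) : ℝ := (n * (1 - beta) - m * (1 + beta)) / ((n - m) * (1 + beta))

/-- The coefficient `B(z)`. -/
def Bcoef (n m beta z : ℝ) : ℝ := 2 * n * beta * z ^ (n - m) / ((n - m) * (1 + beta))

/-- The minimal excessive function `ψ(·;z)` of the skew geometric Brownian motion. -/
def psi (n m beta z x : ℝ) : ℝ :=
  if x ≤ z then x ^ n else Acoef n m beta * x ^ n + Bcoef n m beta z * x ^ m

/-- The function `F(·;z)`. -/
def Ffun (n m beta K z x : ℝ) : ℝ :=
  ((n - 1) * x - n * K) * Acoef n m beta * x ^ (n - m)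
    + ((m - 1) * x - m * K) * Bcoef n m beta z

/-- The critical point `𝔷_c = rK/(r-b)`. -/
def zcrit (r b K : ℝ) : ℝ := r * K / (r - b)

/-- The critical point `𝔷_0 = nK/(n-1)`. -/
def zzero (n K : ℝ) : ℝ := n * K / (n - 1)

/-- The critical point `𝔷_β = nK/(n - (1+β)/(1-β))`. -/
def zbeta (n K beta : ℝ) : ℝ := n * K / (n - (1 + beta) / (1 - beta))

/-- The constant `𝔠`. -/
def gothC (n m beta : ℝ) : ℝ :=
  (-((n - 1) * (n * (1 - beta) - m * (1 + beta))) / (2 * m * (m - 1) * beta)) ^ ((1 : ℝ) / (n - m))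

/-- The function `J(·;z)`. -/
def Jfun (n m beta K z x : ℝ) : ℝ :=
  ((n - 1) * x - n * K) * Acoef n m beta * x ^ (-m)
    - ((m - 1) * x - m * K) * Acoef n m beta * z ^ (n - m) * x ^ (-n)
    - (n - m) * Acoef n m beta * (z - K) * z ^ (-m)

/-- The function `G(·,·;z)`. -/
def Gfun (n m K z x y : ℝ) : ℝ :=
  ((n - 1) * y - n * K) * z ^ m * y ^ (-m) - ((m - 1) * y - m * K) * z ^ n * y ^ (-n)
    - ((n - 1) * x - n * K) * z ^ m * x ^ (-m) + ((m - 1) * x - m * K) * z ^ n * x ^ (-n)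

/-- The function `H(·,·;z)`. -/
def Hfun (n m beta K z x y : ℝ) : ℝ :=
  y ^ (-n) * Ffun n m beta K z y
    - (1 - beta) / (1 + beta) * (((n - 1) * x - n * K) * x ^ (-m))

/-- Convexity on both sides of `c`, together with a line supporting `f` at `c` from both sides,
gives convexity. -/
lemma convexOn_of_glue {S : Set ℝ} {f : ℝ → ℝ} {c s : ℝ} (hS : Convex ℝ S) (hc : c ∈ S)
    (hl : ConvexOn ℝ (S ∩ Iic c) f) (hr : ConvexOn ℝ (S ∩ Ici c) f)
    (hs : ∀ x ∈ S, f c + s * (x - c) ≤ f x) : ConvexOn ℝ S f := by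
  refine convexOn_of_slope_mono_adjacent hS fun {x y w} hx hw hxy hyw => ?_
  rcases le_or_gt w c with hwc | hwc
  · exact hl.slope_mono_adjacent ⟨hx, (hxy.trans hyw).le.trans hwc⟩ ⟨hw, hwc⟩ hxy hyw
  rcases le_or_gt c x with hcx | hcx
  · exact hr.slope_mono_adjacent ⟨hx, hcx⟩ ⟨hw, hwc.le⟩ hxy hyw
  have hfx := hs x hx
  have hfw := hs w hw
  have hyS : y ∈ S := hS.ordConnected.out hx hw ⟨hxy.le, hyw.le⟩
  have hfy := hs y hyS
  -- With `a` the slope of the secant lying on one side of `c`, comparison with `s` extends the bound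
  -- by `a` across `c`.
  rcases lt_trichotomy y c with hyc | rfl | hyc
  · have h := hl.slope_mono_adjacent ⟨hx, hcx.le⟩ ⟨hc, le_refl c⟩ hxy hyc
    rw [le_div_iff₀ (by linarith)] at h ⊢
    set a := (f y - f x) / (y - x)
    have has : a ≤ s := by nlinarith
    nlinarith
  · rw [div_le_div_iff₀ (by linarith) (by linarith)]
    have h1 : f y - f x ≤ s * (y - x) := by linarith
    have h2 : s * (w - y) ≤ f w - f y := by linarith
    nlinarith [mul_le_mul_of_nonneg_right h1 (sub_nonneg.2 hyw.le),
      mul_le_mul_of_nonneg_right h2 (sub_nonneg.2 hxy.le)]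
  · have h := hr.slope_mono_adjacent ⟨hc, le_refl c⟩ ⟨hw, hwc.le⟩ hyc hyw
    rw [div_le_iff₀ (by linarith)] at h ⊢
    set a := (f w - f y) / (w - y)
    have has : s ≤ a := by nlinarith
    nlinarith

/-- The positive root of the quadratic exceeds `1`, since the quadratic is negative at `0` and at
`1`, hence on `[0, 1]` by convexity. -/
lemma one_lt_of_root {sigma b r n : ℝ} (hr : 0 < r) (hbr : b < r) (hn : 0 < n)
    (hnroot : 1 / 2 * sigma ^ 2 * n ^ 2 + (b - 1 / 2 * sigma ^ 2) * n - r = 0) : 1 < n := by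
  by_contra! h
  have h1 : 0 ≤ sigma ^ 2 * (n * (1 - n)) :=
    mul_nonneg (sq_nonneg _) (mul_nonneg hn.le (by linarith))
  have h2 : 0 < n * (r - b) := mul_pos hn (by linarith)
  have h3 : 0 ≤ r * (1 - n) := mul_nonneg hr.le (by linarith)
  nlinarith

theorem stmt_3 (sigma b r K beta z n m : ℝ)
    (hsigma : sigma ≠ 0) (hr : 0 < r) (hbr : b < r) (hK : 0 < K)
    (hb1 : -1 < beta) (hb2 : beta < 1) (hbne : beta ≠ 0) (hz : 0 < z)
    (hm : m < 0) (hn : 0 < n)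
    (hmroot : 1 / 2 * sigma ^ 2 * m ^ 2 + (b - 1 / 2 * sigma ^ 2) * m - r = 0)
    (hnroot : 1 / 2 * sigma ^ 2 * n ^ 2 + (b - 1 / 2 * sigma ^ 2) * n - r = 0)
    (hbneg : beta < 0)
    (hconv : 0 ≤ (n - 1) * (1 - beta) - 2 * m * beta) :
    ConvexOn ℝ (Set.Ioi (0 : ℝ)) (psi n m beta z) := by
  have hn1 : 1 < n := one_lt_of_root hr hbr hn hnroot
  have hnm : 0 < n - m := by linarith
  have hb : 0 < 1 + beta := by linarith
  have hD : 0 < (n - m) * (1 + beta) := mul_pos hnm hb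
  set A := Acoef n m beta with hA
  set B := Bcoef n m beta z with hB
  have hA0 : 0 ≤ A := div_nonneg (by nlinarith) hD.le
  have hzn : z ^ (n - m) * z ^ m = z ^ n := by rw [← Real.rpow_add hz]; congr 1; ring
  have hzn1 : z ^ (n - m) * z ^ (m - 1) = z ^ (n - 1) := by
    rw [← Real.rpow_add hz]; congr 1; ring
  have hAB : A * z ^ n + B * z ^ m = z ^ n := by
    rw [← hzn, hA, hB, Acoef, Bcoef]
    field_simp
    ring
  have hleft : EqOn (fun x : ℝ => x ^ n) (psi n m beta z) (Ioi 0 ∩ Iic z) := by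
    rintro x ⟨-, hx⟩
    exact (if_pos hx).symm
  have hright : EqOn (fun x : ℝ => A * x ^ n + B * x ^ m) (psi n m beta z) (Ioi 0 ∩ Ici z) := by
    rintro x ⟨-, hx⟩
    rcases eq_or_lt_of_le (show z ≤ x from hx) with rfl | hx
    · simpa [psi] using hAB
    · exact (if_neg (not_le.2 hx)).symm
  have hp : ConvexOn ℝ (Ici 0) fun x : ℝ => x ^ n := convexOn_rpow hn1.le
  have hq1 : ∀ x : ℝ, 0 < x → HasDerivAt (fun x : ℝ => A * x ^ n + B * x ^ m)
      (A * (n * x ^ (n - 1)) + B * (m * x ^ (m - 1))) x := fun x hx =>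
    ((Real.hasDerivAt_rpow_const (Or.inl hx.ne')).const_mul A).add
      ((Real.hasDerivAt_rpow_const (Or.inl hx.ne')).const_mul B)
  have hq2 : ∀ x : ℝ, 0 < x →
      HasDerivAt (fun x : ℝ => A * (n * x ^ (n - 1)) + B * (m * x ^ (m - 1)))
      (A * (n * ((n - 1) * x ^ (n - 1 - 1))) + B * (m * ((m - 1) * x ^ (m - 1 - 1)))) x :=
    fun x hx =>
    (((Real.hasDerivAt_rpow_const (Or.inl hx.ne')).const_mul n).const_mul A).add
      (((Real.hasDerivAt_rpow_const (Or.inl hx.ne')).const_mul m).const_mul B)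
  have hq2_nonneg : ∀ x : ℝ, z ≤ x →
      0 ≤ A * (n * ((n - 1) * x ^ (n - 1 - 1))) + B * (m * ((m - 1) * x ^ (m - 1 - 1))) := by
    intro x hx
    have hx0 : 0 < x := hz.trans_le hx
    have hxn : x ^ (n - 1 - 1) = x ^ (n - m) * x ^ (m - 1 - 1) := by
      rw [← Real.rpow_add hx0]; congr 1; ring
    have hmono : z ^ (n - m) ≤ x ^ (n - m) := Real.rpow_le_rpow hz.le hx hnm.le
    have hbracket : A * n * (n - 1) * z ^ (n - m) + B * m * (m - 1)
        = n * z ^ (n - m) * ((n - 1) * (1 - beta) - 2 * m * beta) / (1 + beta) := by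
      rw [hA, hB, Acoef, Bcoef]
      field_simp
      ring
    have h0 : 0 ≤ A * n * (n - 1) * z ^ (n - m) + B * m * (m - 1) := by
      rw [hbracket]
      positivity
    have h1 : A * n * (n - 1) * z ^ (n - m) ≤ A * n * (n - 1) * x ^ (n - m) :=
      mul_le_mul_of_nonneg_left hmono (mul_nonneg (by positivity) (by linarith))
    have h2 : 0 ≤ (A * n * (n - 1) * x ^ (n - m) + B * m * (m - 1)) * x ^ (m - 1 - 1) :=
      mul_nonneg (by linarith) (by positivity)
    rw [hxn]
    linarith
  have hq : ConvexOn ℝ (Ici z) fun x : ℝ => A * x ^ n + B * x ^ m := by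
    refine convexOn_of_hasDerivWithinAt2_nonneg (convex_Ici z)
      (fun x hx => (hq1 x (hz.trans_le hx)).continuousAt.continuousWithinAt)
      (fun x hx => (hq1 x (hz.trans_le (interior_subset hx))).hasDerivWithinAt)
      (fun x hx => (hq2 x (hz.trans_le (interior_subset hx))).hasDerivWithinAt)
      (fun x hx => hq2_nonneg x (interior_subset hx))
  have hjump : n * z ^ (n - 1) ≤ A * (n * z ^ (n - 1)) + B * (m * z ^ (m - 1)) := by
    have h : A * (n * z ^ (n - 1)) + B * (m * z ^ (m - 1))
        = (1 - beta) / (1 + beta) * (n * z ^ (n - 1)) := by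
      rw [← hzn1, hA, hB, Acoef, Bcoef]
      field_simp
      ring
    rw [h]
    refine le_mul_of_one_le_left (by positivity) ?_
    rw [le_div_iff₀ hb]
    linarith
  have hpsiz : psi n m beta z z = z ^ n := if_pos le_rfl
  refine convexOn_of_glue (c := z) (s := n * z ^ (n - 1)) (convex_Ioi 0) hz
    ((hp.subset (fun x hx => le_of_lt (mem_Ioi.1 hx.1)) ((convex_Ioi 0).inter (convex_Iic z))).congr hleft)
    ((hq.subset inter_subset_right ((convex_Ioi 0).inter (convex_Ici z))).congr hright) ?_
  intro x hx
  rw [hpsiz]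
  rcases lt_trichotomy x z with hxz | rfl | hxz
  · rw [← hleft ⟨hx, hxz.le⟩]
    have h := hp.slope_le_of_hasDerivAt (mem_Ici.2 (le_of_lt (mem_Ioi.1 hx))) hz.le hxz
      (Real.hasDerivAt_rpow_const (Or.inl hz.ne'))
    rw [slope_def_field, div_le_iff₀ (by linarith)] at h
    dsimp only at h ⊢
    linarith
  · simp [hpsiz]
  · rw [← hright ⟨hx, hxz.le⟩]
    have h := hjump.trans (hq.le_slope_of_hasDerivAt self_mem_Ici hxz.le hxz (hq1 z hz))
    rw [slope_def_field, le_div_iff₀ (by linarith)] at h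
    dsimp only at h ⊢
    linarith
end
end

section
/- Suppose b > 0 and (n−1)(1−β) − 2mβ < 0 (this forces β ∈ (−1,0)). Then 𝔠 ∈ (0,1), and the function x ↦ ψ(x;z) is convex on (0,z], concave on [z, 𝔠⁻¹z], and convex on [𝔠⁻¹z, ∞). -/
/-!
On `[z, ∞)` the function is `g(x) = A x^n + B x^m` (the two formulas agree at `z`), and
`g''(x) = x^(m-2) (A n (n-1) x^(n-m) + B m (m-1))`. Under the hypotheses `n > 1`, `β < 0`, hence
`A > 0 > B`, so the bracket is increasing in `x`; it equals
`A n (n-1) (x^(n-m) - (z/𝔠)^(n-m))`, so `g''` changes sign exactly at `z/𝔠`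
(`second_deriv_factor`, `convexOn_rpow_comb`).
That `𝔠 < 1` comes from the factorisation
`(n-1)(n(1-β) - m(1+β)) + 2m(m-1)β = (n-m)((n-1)(1-β) - 2mβ)`.
-/

open Set Filter Topology

noncomputable section

/-- Second-derivative test for `A x^n + B x^m` on a subset of the positive half-line. -/
lemma convexOn_rpow_comb {n m A B : ℝ} {s : Set ℝ} (hs : Convex ℝ s) (hpos : ∀ x ∈ s, 0 < x)
    (h : ∀ x ∈ interior s, 0 ≤ A * (n * (n - 1)) * x ^ (n - m) + B * (m * (m - 1))) :
    ConvexOn ℝ s (fun x => A * x ^ n + B * x ^ m) := by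
  have hd : ∀ k x : ℝ, 0 < x → HasDerivAt (fun y : ℝ => y ^ k) (k * x ^ (k - 1)) x :=
    fun k x hx => Real.hasDerivAt_rpow_const (Or.inl hx.ne')
  refine convexOn_of_hasDerivWithinAt2_nonneg hs
    (f' := fun x => A * (n * x ^ (n - 1)) + B * (m * x ^ (m - 1)))
    (f'' := fun x => A * (n * ((n - 1) * x ^ (n - 1 - 1))) + B * (m * ((m - 1) * x ^ (m - 1 - 1))))
    ?_ ?_ ?_ ?_
  · intro x hx
    exact (((hd n x (hpos x hx)).const_mul A).add
      ((hd m x (hpos x hx)).const_mul B)).continuousAt.continuousWithinAt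
  · intro x hx
    have hx0 := hpos x (interior_subset hx)
    exact (((hd n x hx0).const_mul A).add ((hd m x hx0).const_mul B)).hasDerivWithinAt
  · intro x hx
    have hx0 := hpos x (interior_subset hx)
    exact ((((hd (n - 1) x hx0).const_mul n).const_mul A).add
      (((hd (m - 1) x hx0).const_mul m).const_mul B)).hasDerivWithinAt
  · intro x hx
    have hx0 := hpos x (interior_subset hx)
    have e : x ^ (n - 1 - 1) = x ^ (n - m) * x ^ (m - 1 - 1) := by
      rw [← Real.rpow_add hx0]; congr 1; ring
    have := mul_nonneg (h x hx) (Real.rpow_pos_of_pos hx0 (m - 1 - 1)).le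
    rw [e]
    linarith

lemma concaveOn_rpow_comb {n m A B : ℝ} {s : Set ℝ} (hs : Convex ℝ s) (hpos : ∀ x ∈ s, 0 < x)
    (h : ∀ x ∈ interior s, A * (n * (n - 1)) * x ^ (n - m) + B * (m * (m - 1)) ≤ 0) :
    ConcaveOn ℝ s (fun x => A * x ^ n + B * x ^ m) := by
  have := (convexOn_rpow_comb (n := n) (m := m) (A := -A) (B := -B) hs hpos
    (fun x hx => by linarith [h x hx])).neg
  refine this.congr fun x _ => ?_
  simp only [Pi.neg_apply]
  ring

/-- Both formulas for `psi` hold at `z`, so the second one is valid on all of `[z, ∞)`. -/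
lemma psi_eq_of_ge {n m beta z x : ℝ} (hb1 : -1 < beta) (hz : 0 < z) (hmn : m < n)
    (hx : z ≤ x) :
    psi n m beta z x = Acoef n m beta * x ^ n + Bcoef n m beta z * x ^ m := by
  unfold psi
  split_ifs with h
  · obtain rfl : x = z := le_antisymm h hx
    have e : x ^ n = x ^ (n - m) * x ^ m := by
      rw [← Real.rpow_add hz]; congr 1; ring
    have h1 : n - m ≠ 0 := by linarith
    have h2 : 1 + beta ≠ 0 := by linarith
    rw [e]
    unfold Acoef Bcoef
    field_simp
    ring
  · rfl

/-- The normalised second derivative of the outer branch of `psi` vanishes at `z / 𝔠`. -/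
lemma second_deriv_factor {n m beta z : ℝ} (hb1 : -1 < beta) (hb0 : beta < 0) (hz : 0 < z)
    (hm : m < 0) (hn : 1 < n) (x : ℝ) :
    Acoef n m beta * (n * (n - 1)) * x ^ (n - m) + Bcoef n m beta z * (m * (m - 1)) =
      Acoef n m beta * (n * (n - 1)) *
        (x ^ (n - m) - ((gothC n m beta)⁻¹ * z) ^ (n - m)) := by
  have hD : 0 < n * (1 - beta) - m * (1 + beta) := by nlinarith
  have h1 : n - m ≠ 0 := by linarith
  have h2 : 1 + beta ≠ 0 := by linarith
  have h3 : m - 1 ≠ 0 := by linarith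
  have h4 : n - 1 ≠ 0 := by linarith
  have hq : 0 < -((n - 1) * (n * (1 - beta) - m * (1 + beta))) / (2 * m * (m - 1) * beta) :=
    div_pos_of_neg_of_neg (neg_neg_of_pos (mul_pos (by linarith) hD))
      (mul_neg_of_pos_of_neg (by nlinarith) hb0)
  have hc : gothC n m beta ^ (n - m) =
      -((n - 1) * (n * (1 - beta) - m * (1 + beta))) / (2 * m * (m - 1) * beta) := by
    unfold gothC
    rw [← Real.rpow_mul hq.le, one_div_mul_cancel h1, Real.rpow_one]
  have hc0 : 0 ≤ gothC n m beta := Real.rpow_nonneg hq.le _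
  rw [Real.mul_rpow (inv_nonneg.2 hc0) hz.le, Real.inv_rpow hc0, hc]
  have hD' := hD.ne'
  have hm' := hm.ne
  have hb' := hb0.ne
  unfold Acoef Bcoef
  generalize hE : n * (1 - beta) - m * (1 + beta) = D at *
  field_simp
  ring

theorem stmt_4 (sigma b r K beta z n m : ℝ)
    (hsigma : sigma ≠ 0) (hr : 0 < r) (hbr : b < r) (hK : 0 < K)
    (hb1 : -1 < beta) (hb2 : beta < 1) (hbne : beta ≠ 0) (hz : 0 < z)
    (hm : m < 0) (hn : 0 < n)
    (hmroot : 1 / 2 * sigma ^ 2 * m ^ 2 + (b - 1 / 2 * sigma ^ 2) * m - r = 0)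
    (hnroot : 1 / 2 * sigma ^ 2 * n ^ 2 + (b - 1 / 2 * sigma ^ 2) * n - r = 0)
    (hb : 0 < b)
    (hconv : (n - 1) * (1 - beta) - 2 * m * beta < 0) :
    gothC n m beta ∈ Set.Ioo (0 : ℝ) 1 ∧
    ConvexOn ℝ (Set.Ioc (0 : ℝ) z) (psi n m beta z) ∧
    ConcaveOn ℝ (Set.Icc z ((gothC n m beta)⁻¹ * z)) (psi n m beta z) ∧
    ConvexOn ℝ (Set.Ici ((gothC n m beta)⁻¹ * z)) (psi n m beta z) := by
  have hs2 : 0 < sigma ^ 2 := by positivity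
  -- The quadratic is convex and negative at `0` and at `1`, so its positive root exceeds `1`.
  have hn1 : 1 < n := by
    by_contra! h
    nlinarith [mul_nonneg hs2.le (mul_nonneg hn.le (sub_nonneg.2 h)), mul_nonneg hn.le hb.le]
  have hb0 : beta < 0 := by
    by_contra! h
    nlinarith [mul_pos (sub_pos.2 hn1) (sub_pos.2 hb2), mul_nonneg (neg_nonneg.2 hm.le) h]
  have hnm : 0 < n - m := by linarith
  have hD : 0 < n * (1 - beta) - m * (1 + beta) := by nlinarith
  have hden : 2 * m * (m - 1) * beta < 0 := mul_neg_of_pos_of_neg (by nlinarith) hb0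
  have hq : 0 < -((n - 1) * (n * (1 - beta) - m * (1 + beta))) / (2 * m * (m - 1) * beta) :=
    div_pos_of_neg_of_neg (neg_neg_of_pos (mul_pos (by linarith) hD)) hden
  have hq1 : -((n - 1) * (n * (1 - beta) - m * (1 + beta))) / (2 * m * (m - 1) * beta) < 1 := by
    rw [div_lt_one_of_neg hden]
    have e : (n - 1) * (n * (1 - beta) - m * (1 + beta)) + 2 * m * (m - 1) * beta =
        (n - m) * ((n - 1) * (1 - beta) - 2 * m * beta) := by ring
    linarith [mul_neg_of_pos_of_neg hnm hconv]
  have hc0 : 0 < gothC n m beta := Real.rpow_pos_of_pos hq _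
  have hc1 : gothC n m beta < 1 := Real.rpow_lt_one hq.le hq1 (by positivity)
  have hA : 0 ≤ Acoef n m beta * (n * (n - 1)) :=
    mul_nonneg (div_nonneg hD.le (mul_nonneg hnm.le (by linarith)))
      (mul_nonneg hn.le (by linarith))
  have hfac := second_deriv_factor (z := z) hb1 hb0 hz hm hn1
  have hw : z ≤ (gothC n m beta)⁻¹ * z :=
    le_mul_of_one_le_left hz.le ((one_le_inv₀ hc0).2 hc1.le)
  set w := (gothC n m beta)⁻¹ * z
  have hw0 : 0 < w := hz.trans_le hw
  have hpsi : ∀ x, z ≤ x → Acoef n m beta * x ^ n + Bcoef n m beta z * x ^ m =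
      psi n m beta z x := fun x hx => (psi_eq_of_ge hb1 hz (by linarith) hx).symm
  refine ⟨⟨hc0, hc1⟩, ?_, ?_, ?_⟩
  · refine ((convexOn_rpow hn1.le).subset (fun x hx => hx.1.le) (convex_Ioc 0 z)).congr ?_
    intro x hx
    simp [psi, hx.2]
  · refine (concaveOn_rpow_comb (convex_Icc z w) (fun x hx => hz.trans_le hx.1) ?_).congr
      fun x hx => hpsi x hx.1
    intro x hx
    have hx' := interior_subset hx
    rw [hfac]
    exact mul_nonpos_of_nonneg_of_nonpos hA
      (sub_nonpos.2 (Real.rpow_le_rpow (hz.le.trans hx'.1) hx'.2 hnm.le))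
  · refine (convexOn_rpow_comb (convex_Ici w) (fun x hx => hw0.trans_le hx) ?_).congr
      fun x hx => hpsi x (hw.trans hx)
    intro x hx
    rw [hfac]
    exact mul_nonneg hA
      (sub_nonneg.2 (Real.rpow_le_rpow hw0.le (interior_subset hx) hnm.le))
end
end

section
/- Suppose β ∈ (0,1). Then the function x ↦ ψ(x;z) is convex on (0,z] and convex on [z,∞), but it is not convex on all of (0,∞); indeed its one-sided derivatives at z satisfy ψ′(z+;z) = nA z^{n−1} + mB(z) z^{m−1} < n z^{n−1} = ψ′(z−;z). -/
/-!
On each side of `z` the function `psi` is a combination, with positive coefficients when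
`0 < beta < 1`, of the powers `x ^ n` and `x ^ m`. Both powers are convex on `(0, ∞)`: `m` is
negative, and `n > 1` because the characteristic quadratic is convex and negative at `0` (value
`-r`) and at `1` (value `b - r`). The two formulas agree at `z`, so the right-hand one holds on all of `[z, ∞)`.
The choice of coefficients makes the right derivative at `z` equal to `(1 - beta) / (1 + beta)`
times the left derivative `n * z ^ (n - 1)`, hence strictly smaller. A function convex near `z`
would have its left derivative at most its right derivative, so `psi` is not convex on `(0, ∞)`.
-/

open Set Filter Topology

noncomputable section

lemma psi_eq_right {n m beta z x : ℝ} (hz : 0 < z) (hnm : m < n) (hb : 0 < 1 + beta)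
    (hx : z ≤ x) :
    psi n m beta z x = Acoef n m beta * x ^ n + Bcoef n m beta z * x ^ m := by
  rcases hx.eq_or_lt with rfl | h
  · have h1 : n - m ≠ 0 := by linarith
    have h2 : z ^ m ≠ 0 := (Real.rpow_pos_of_pos hz m).ne'
    rw [psi, if_pos le_rfl, Acoef, Bcoef, Real.rpow_sub hz]
    field_simp
    ring
  · rw [psi, if_neg h.not_ge]

/-- The one-sided derivatives of `psi` at `z` have ratio `(1 - beta) / (1 + beta)`. -/
lemma right_slope_eq {n m beta z : ℝ} (hz : 0 < z) (hnm : m < n) (hb : 0 < 1 + beta) :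
    n * Acoef n m beta * z ^ (n - 1) + m * Bcoef n m beta z * z ^ (m - 1)
      = (1 - beta) / (1 + beta) * (n * z ^ (n - 1)) := by
  have h1 : n - m ≠ 0 := by linarith
  have h2 : z ^ m ≠ 0 := (Real.rpow_pos_of_pos hz m).ne'
  rw [Acoef, Bcoef, Real.rpow_sub hz, Real.rpow_sub hz, Real.rpow_sub hz, Real.rpow_one]
  field_simp
  ring

/-- Since `x ^ p = exp (p * log x)`, convexity follows from that of the increasing function `exp`
and of `p * log x` for `p ≤ 0`. -/
lemma convexOn_rpow_neg_exponent {p : ℝ} (hp : p ≤ 0) :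
    ConvexOn ℝ (Set.Ioi 0) fun x : ℝ => x ^ p := by
  have hlog : ConvexOn ℝ (Set.Ioi 0) fun x : ℝ => Real.log x * p :=
    (strictConcaveOn_log_Ioi.concaveOn.neg.smul (neg_nonneg.2 hp)).congr fun x _ => by
      simp [mul_comm]
  refine ConvexOn.congr (f := Real.exp ∘ fun x => Real.log x * p) ?_
    fun x hx => (Real.rpow_def_of_pos hx p).symm
  refine ConvexOn.comp ⟨?_, fun x _ y _ => convexOn_exp.2 (Set.mem_univ x) (Set.mem_univ y)⟩
    hlog (Real.exp_monotone.monotoneOn _)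
  -- The image of `x ↦ log x * p` is an interval, as `(0, ∞)` is connected.
  refine Set.OrdConnected.convex (IsPreconnected.ordConnected ?_)
  exact isPreconnected_Ioi.image _ fun x hx =>
    ((Real.continuousAt_log (ne_of_gt hx)).mul continuousAt_const).continuousWithinAt

theorem stmt_5 (sigma b r K beta z n m : ℝ)
    (hsigma : sigma ≠ 0) (hr : 0 < r) (hbr : b < r) (hK : 0 < K)
    (hb1 : -1 < beta) (hb2 : beta < 1) (hbne : beta ≠ 0) (hz : 0 < z)
    (hm : m < 0) (hn : 0 < n)
    (hmroot : 1 / 2 * sigma ^ 2 * m ^ 2 + (b - 1 / 2 * sigma ^ 2) * m - r = 0)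
    (hnroot : 1 / 2 * sigma ^ 2 * n ^ 2 + (b - 1 / 2 * sigma ^ 2) * n - r = 0)
    (hbpos : 0 < beta) :
    ConvexOn ℝ (Set.Ioc (0 : ℝ) z) (psi n m beta z) ∧
    ConvexOn ℝ (Set.Ici z) (psi n m beta z) ∧
    ¬ ConvexOn ℝ (Set.Ioi (0 : ℝ)) (psi n m beta z) ∧
    HasDerivWithinAt (psi n m beta z) (n * z ^ (n - 1)) (Set.Iic z) z ∧
    HasDerivWithinAt (psi n m beta z)
      (n * Acoef n m beta * z ^ (n - 1) + m * Bcoef n m beta z * z ^ (m - 1)) (Set.Ici z) z ∧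
    n * Acoef n m beta * z ^ (n - 1) + m * Bcoef n m beta z * z ^ (m - 1) < n * z ^ (n - 1) := by
  have hb : 0 < 1 + beta := by linarith
  have hnm : m < n := hm.trans hn
  have hn1 : 1 < n := by
    by_contra! h
    -- If `n ≤ 1`, the quadratic at `n` is at most `(1 - n) * (-r) + n * (b - r)`, since `n ^ 2 ≤ n`.
    have h1 : 0 ≤ sigma ^ 2 * (n * (1 - n)) :=
      mul_nonneg (sq_nonneg _) (mul_nonneg hn.le (by linarith))
    have h2 : 0 < n * (r - b) := mul_pos hn (by linarith)
    have h3 : 0 ≤ (1 - n) * r := mul_nonneg (by linarith) hr.le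
    nlinarith
  have hA : 0 < Acoef n m beta :=
    div_pos (by nlinarith [mul_pos hn (sub_pos.2 hb2), mul_pos (neg_pos.2 hm) hb])
      (mul_pos (by linarith) hb)
  have hB : 0 < Bcoef n m beta z :=
    div_pos (mul_pos (by positivity) (Real.rpow_pos_of_pos hz _)) (mul_pos (by linarith) hb)
  have hslope : n * Acoef n m beta * z ^ (n - 1) + m * Bcoef n m beta z * z ^ (m - 1)
      < n * z ^ (n - 1) := by
    rw [right_slope_eq hz hnm hb]
    exact mul_lt_of_lt_one_left (mul_pos hn (Real.rpow_pos_of_pos hz _))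
      ((div_lt_one hb).2 (by linarith))
  have hleft : HasDerivWithinAt (psi n m beta z) (n * z ^ (n - 1)) (Set.Iic z) z :=
    (Real.hasDerivAt_rpow_const (p := n) (Or.inl hz.ne')).hasDerivWithinAt.congr
      (fun x hx => if_pos hx) (if_pos le_rfl)
  have hright : HasDerivWithinAt (psi n m beta z)
      (n * Acoef n m beta * z ^ (n - 1) + m * Bcoef n m beta z * z ^ (m - 1)) (Set.Ici z) z := by
    have h := ((Real.hasDerivAt_rpow_const (p := n) (Or.inl hz.ne')).const_mul
      (Acoef n m beta)).add ((Real.hasDerivAt_rpow_const (p := m) (Or.inl hz.ne')).const_mul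
      (Bcoef n m beta z))
    refine (h.hasDerivWithinAt.congr (fun x hx => psi_eq_right hz hnm hb hx)
      (psi_eq_right hz hnm hb le_rfl)).congr_deriv ?_
    ring
  refine ⟨?_, ?_, ?_, hleft, hright, hslope⟩
  · have h : ConvexOn ℝ (Set.Ioc 0 z) fun x : ℝ => x ^ n :=
      (convexOn_rpow hn1.le).subset (fun x hx => Set.mem_Ici.2 hx.1.le) (convex_Ioc 0 z)
    exact h.congr fun x hx => (if_pos hx.2).symm
  · have hsub : Set.Ici z ⊆ Set.Ioi 0 := fun x hx => hz.trans_le hx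
    have h1 : ConvexOn ℝ (Set.Ici z) fun x : ℝ => x ^ n :=
      (convexOn_rpow hn1.le).subset (fun x hx => Set.mem_Ici.2 (le_of_lt (hsub hx))) (convex_Ici z)
    have h2 : ConvexOn ℝ (Set.Ici z) fun x : ℝ => x ^ m :=
      (convexOn_rpow_neg_exponent hm.le).subset hsub (convex_Ici z)
    exact ((h1.smul hA.le).add (h2.smul hB.le)).congr
      fun x hx => (psi_eq_right hz hnm hb hx).symm
  · intro hconv
    have h := hconv.leftDeriv_le_rightDeriv_of_mem_interior
      (x := z) (by rw [interior_Ioi]; exact hz)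
    rw [(hleft.mono Set.Iio_subset_Iic_self).derivWithin (uniqueDiffWithinAt_Iio z),
      (hright.mono Set.Ioi_subset_Ici_self).derivWithin (uniqueDiffWithinAt_Ioi z)] at h
    exact h.not_gt hslope
end
end

section
/- Suppose β ∈ (−1,0) and (n−1)(1−β) − 2mβ ≥ 0. Then n > (1+β)/(1−β), so 𝔷_β is well defined, and the critical points satisfy 0 < 𝔷_c ≤ 𝔷_β < 𝔷_0, with 𝔷_c = 𝔷_β if and only if (n−1)(1−β) − 2mβ = 0. -/
/-!
Vieta's formulas for the quadratic give `r = -s * m * n` and `r - b = s * (n - 1) * (1 - m)` with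
`s = σ² / 2 > 0`; in particular `n > 1`. Hence `𝔷_c = n K / d_c` with
`d_c = (n - 1) * (1 - m) / (-m)`, so that all three critical points are quotients of `n K > 0`
by a positive denominator, and comparing them amounts to comparing the denominators. On the one
hand `(1 + β) / (1 - β) < 1`, which places `𝔷_β` below `𝔷_0`; on the other hand
`d_c - (n - (1 + β) / (1 - β)) = ((n - 1) * (1 - β) - 2 * m * β) / (-m * (1 - β))`, which compares
`𝔷_c` with `𝔷_β`.
-/

open Set Filter Topology

noncomputable section

theorem stmt_6 (sigma b r K beta n m : ℝ)
    (hsigma : sigma ≠ 0) (hr : 0 < r) (hbr : b < r) (hK : 0 < K)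
    (hb1 : -1 < beta) (hb2 : beta < 1) (hbne : beta ≠ 0)
    (hm : m < 0) (hn : 0 < n)
    (hmroot : 1 / 2 * sigma ^ 2 * m ^ 2 + (b - 1 / 2 * sigma ^ 2) * m - r = 0)
    (hnroot : 1 / 2 * sigma ^ 2 * n ^ 2 + (b - 1 / 2 * sigma ^ 2) * n - r = 0)
    (hbneg : beta < 0)
    (hconv : 0 ≤ (n - 1) * (1 - beta) - 2 * m * beta) :
    (1 + beta) / (1 - beta) < n ∧
    0 < zcrit r b K ∧
    zcrit r b K ≤ zbeta n K beta ∧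
    zbeta n K beta < zzero n K ∧
    (zcrit r b K = zbeta n K beta ↔ (n - 1) * (1 - beta) - 2 * m * beta = 0) := by
  have hs : 0 < 1 / 2 * sigma ^ 2 := by positivity
  set s := 1 / 2 * sigma ^ 2 with hs_def
  -- Vieta: sum and product of the roots.
  have hsum : s * (n + m) = s - b := by
    have hnm : n - m ≠ 0 := by linarith
    apply mul_left_cancel₀ hnm
    linear_combination hnroot - hmroot
  have hprod : r = s * (-m) * n := by linear_combination -hnroot + n * hsum
  have hrb : r - b = s * (n - 1) * (1 - m) := by linear_combination hprod - hsum
  have hn1 : 0 < n - 1 := by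
    have h1 : 0 < (s * (1 - m)) * (n - 1) := by linarith
    exact pos_of_mul_pos_right h1 (by nlinarith)
  have hm' : 0 < -m := by linarith
  have h1m : 0 < 1 - m := by linarith
  have h1b : 0 < 1 - beta := by linarith
  have hlt : (1 + beta) / (1 - beta) < 1 := by
    rw [div_lt_one h1b]
    linarith
  have hnK : 0 < n * K := mul_pos hn hK
  have hdc : 0 < (n - 1) * (1 - m) / (-m) := by positivity
  have hdb : 0 < n - (1 + beta) / (1 - beta) := by linarith
  have hzc : zcrit r b K = n * K / ((n - 1) * (1 - m) / (-m)) := by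
    rw [zcrit, hrb, hprod]
    field_simp
  have hdiff : (n - 1) * (1 - m) / (-m) - (n - (1 + beta) / (1 - beta))
      = ((n - 1) * (1 - beta) - 2 * m * beta) / (-m * (1 - beta)) := by
    have hmne : m ≠ 0 := hm.ne
    field_simp
    ring
  have hden : 0 < -m * (1 - beta) := mul_pos hm' h1b
  refine ⟨by linarith, ?_, ?_, ?_, ?_⟩
  · rw [hzc]
    positivity
  · rw [hzc, zbeta]
    apply div_le_div_of_nonneg_left hnK.le hdb
    have := div_nonneg hconv hden.le
    linarith
  · rw [zbeta, zzero]
    exact div_lt_div_of_pos_left hnK hn1 (by linarith)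
  · rw [hzc, zbeta, div_eq_div_iff hdc.ne' hdb.ne', mul_right_inj' hnK.ne', eq_comm, ← sub_eq_zero, hdiff, div_eq_zero_iff]
    exact or_iff_left hden.ne'
end
end

section
/- Suppose b > 0 and (n−1)(1−β) − 2mβ < 0 (this forces β ∈ (−1,0)). Then n > (1+β)/(1−β), so 𝔷_β is well defined, and the critical points satisfy 0 < 𝔷_β < 𝔷_c < 𝔷_0. -/
/-!
With `s = σ² / 2`, Vieta's formulas for the quadratic give `r = -s n m` and, evaluating at `k = 1`,
`r - b = s (n - 1) (1 - m)`. Hence `n > 1` and `zcrit = -n m K / ((n - 1) (1 - m))`.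
The inequality `zcrit < zzero` then reads `-m < 1 - m`. The convexity condition forces `β < 0`, so
`ρ = (1 + β) / (1 - β) < 1 < n`, and after clearing denominators `zbeta < zcrit` reads
`n - 1 < -m (1 - ρ) = 2 m β / (1 - β)`, which is the condition itself.
-/

open Set Filter Topology

noncomputable section

theorem stmt_7 (sigma b r K beta n m : ℝ)
    (hsigma : sigma ≠ 0) (hr : 0 < r) (hbr : b < r) (hK : 0 < K)
    (hb1 : -1 < beta) (hb2 : beta < 1) (hbne : beta ≠ 0)
    (hm : m < 0) (hn : 0 < n)
    (hmroot : 1 / 2 * sigma ^ 2 * m ^ 2 + (b - 1 / 2 * sigma ^ 2) * m - r = 0)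
    (hnroot : 1 / 2 * sigma ^ 2 * n ^ 2 + (b - 1 / 2 * sigma ^ 2) * n - r = 0)
    (hb : 0 < b)
    (hconv : (n - 1) * (1 - beta) - 2 * m * beta < 0) :
    (1 + beta) / (1 - beta) < n ∧
    0 < zbeta n K beta ∧
    zbeta n K beta < zcrit r b K ∧
    zcrit r b K < zzero n K := by
  have hs : 0 < 1 / 2 * sigma ^ 2 := by positivity
  generalize 1 / 2 * sigma ^ 2 = s at *
  have hsum : s * (n + m) + b - s = 0 := by
    have h : (n - m) * (s * (n + m) + b - s) = 0 := by linear_combination hnroot - hmroot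
    rcases mul_eq_zero.mp h with h | h
    · linarith
    · exact h
  have hrv : r = -(s * n * m) := by linear_combination n * hsum - hnroot
  have hrb : r - b = s * ((n - 1) * (1 - m)) := by linear_combination hrv - hsum
  have h1m : 0 < 1 - m := by linarith
  have hn1 : 0 < n - 1 := by
    have h : 0 < s * ((n - 1) * (1 - m)) := by linarith
    exact pos_of_mul_pos_left (pos_of_mul_pos_right h hs.le) h1m.le
  have hb' : 0 < 1 - beta := by linarith
  have hbeta : beta < 0 := by
    by_contra! h
    nlinarith [mul_pos hn1 hb', mul_nonneg h (neg_pos.mpr hm).le]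
  have hrho : (1 + beta) / (1 - beta) < 1 := by rw [div_lt_one hb']; linarith
  have hden : 0 < n - (1 + beta) / (1 - beta) := by linarith
  have hc : zcrit r b K = n * K * (-m / ((n - 1) * (1 - m))) := by
    unfold zcrit
    rw [hrb, hrv]
    field_simp
  have hnK : 0 < n * K := mul_pos hn hK
  refine ⟨by linarith, div_pos hnK hden, ?_, ?_⟩
  · rw [hc, zbeta, div_eq_mul_inv, ← one_div]
    refine mul_lt_mul_of_pos_left ?_ hnK
    rw [div_lt_div_iff₀ hden (mul_pos hn1 h1m)]
    have h : n - 1 < 2 * m * beta / (1 - beta) := by rw [lt_div_iff₀ hb']; linarith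
    have h2 : 2 * m * beta / (1 - beta) = -m * (1 - (1 + beta) / (1 - beta)) := by
      field_simp
      ring
    rw [h2] at h
    linarith
  · rw [hc, zzero, div_eq_mul_inv (n * K), ← one_div]
    refine mul_lt_mul_of_pos_left ?_ hnK
    rw [div_lt_div_iff₀ (mul_pos hn1 h1m) hn1]
    nlinarith
end
end

section
/- Suppose β ∈ (0,1). Then 0 < 𝔷_c < 𝔷_0; moreover, if n > (1+β)/(1−β) then 𝔷_0 < 𝔷_β, and if n < (1+β)/(1−β) then 𝔷_β < 0 < 𝔷_0. -/
/-!
With `s = σ² / 2 > 0` the equation for the root `n` reads `s n (n - 1) + b n = r`. If `n ≤ 1`,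
then `b n ≥ r > 0`, which forces `b ≥ r`; hence `n > 1`, and then `b n < r`. After clearing
denominators, `𝔷_c < 𝔷_0` is exactly `b n < r`. The comparison of `𝔷_0` with `𝔷_β` only uses
`(1 + β) / (1 - β) > 1`: the two fractions have the same positive numerator `n K`.
-/

open Set Filter Topology

noncomputable section

theorem stmt_8 (sigma b r K beta n m : ℝ)
    (hsigma : sigma ≠ 0) (hr : 0 < r) (hbr : b < r) (hK : 0 < K)
    (hb1 : -1 < beta) (hb2 : beta < 1) (hbne : beta ≠ 0)
    (hm : m < 0) (hn : 0 < n)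
    (hmroot : 1 / 2 * sigma ^ 2 * m ^ 2 + (b - 1 / 2 * sigma ^ 2) * m - r = 0)
    (hnroot : 1 / 2 * sigma ^ 2 * n ^ 2 + (b - 1 / 2 * sigma ^ 2) * n - r = 0)
    (hbpos : 0 < beta) :
    0 < zcrit r b K ∧
    zcrit r b K < zzero n K ∧
    ((1 + beta) / (1 - beta) < n → zzero n K < zbeta n K beta) ∧
    (n < (1 + beta) / (1 - beta) → zbeta n K beta < 0 ∧ 0 < zzero n K) := by
  have hs : 0 < sigma ^ 2 := by positivity
  have hn1 : 1 < n := by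
    by_contra! h
    have h1 : 0 ≤ sigma ^ 2 * (n * (1 - n)) :=
      mul_nonneg hs.le (mul_nonneg hn.le (by linarith))
    have h2 : r ≤ b * n := by linarith
    have h3 : 0 < b := by
      by_contra! hb
      linarith [mul_nonpos_of_nonpos_of_nonneg hb hn.le]
    linarith [mul_le_of_le_one_right h3.le h]
  have hbn : b * n < r := by
    have h1 : 0 < sigma ^ 2 * (n * (n - 1)) := mul_pos hs (mul_pos hn (by linarith))
    linarith
  have hrb : 0 < r - b := by linarith
  have hn1' : 0 < n - 1 := by linarith
  have hnK : 0 < n * K := by positivity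
  have hq : 1 < (1 + beta) / (1 - beta) := by
    rw [one_lt_div (by linarith)]
    linarith
  unfold zcrit zzero zbeta
  refine ⟨by positivity, ?_, fun h => ?_, fun h => ⟨?_, by positivity⟩⟩
  · rw [div_lt_div_iff₀ hrb hn1']
    linarith [mul_lt_mul_of_pos_right hbn hK]
  · exact div_lt_div_of_pos_left hnK (by linarith) (by linarith)
  · exact div_neg_of_pos_of_neg hnK (by linarith)
end
end

section
/- Suppose β ∈ (−1,0) and (n−1)(1−β) − 2mβ ≥ 0, and for z ∈ (0, 𝔷_β) let α(z) denote the unique point of (𝔷_β, 𝔷_0) at which F(·;z) vanishes. Then α is strictly decreasing on (0, 𝔷_β), lim_{z↓0} α(z) = 𝔷_0 and lim_{z↑𝔷_β} α(z) = 𝔷_β. -/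
/-!
Write `p = n - m`. The equation `F(x;z) = 0` is linear in `z ^ p`, and solving it gives
`z ^ p = g(x)` with
`g(x) = (n(1-β) - m(1+β)) (nK - (n-1)x) x ^ p / ((-2nβ) ((1-m)x + mK))`.
The numerator of `g'` is, up to a positive factor, `-((n-1)(1-m)x + nmK)(x - K)`. At `x = 𝔷_β` the
first bracket is a positive multiple of `(n-1)(1-β) - 2mβ`, so the hypothesis
`(n-1)(1-β) - 2mβ ≥ 0` says exactly that it is nonnegative there; since `𝔷_β > K`, the function `g`
is strictly decreasing on `[𝔷_β, 𝔷_0]` (`strictAntiOn_powerOfRoot`).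

As `g(α(z)) = z ^ p` is increasing in `z`, `α` is strictly decreasing. The limits follow by
comparison: `g(𝔷_0) = 0` and `g(𝔷_β) = 𝔷_β ^ p`, so for each `a` strictly between `𝔷_β` and `𝔷_0`
one has `0 < g(a) < 𝔷_β ^ p`; hence `z ^ p < g(a)`, i.e. `a < α(z)`, for small `z`, and
`g(a) < z ^ p`, i.e. `α(z) < a`, for `z` close to `𝔷_β`.
-/

open Set Filter Topology

noncomputable section

/-- The function `g` with `F(x;z) = 0 ↔ g(x) = z ^ (n - m)` for `x > K`. -/
def powerOfRoot (n m beta K x : ℝ) : ℝ :=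
  (n * (1 - beta) - m * (1 + beta)) * ((n * K - (n - 1) * x) * x ^ (n - m))
    / ((-2 * n * beta) * ((1 - m) * x + m * K))

/-- The value of the quadratic at `1` is `b - r < 0`, so `1` lies strictly between its roots. -/
lemma one_lt_of_roots {sigma b r n m : ℝ} (hbr : b < r) (hm : m < 0) (hn : 0 < n)
    (hmroot : 1 / 2 * sigma ^ 2 * m ^ 2 + (b - 1 / 2 * sigma ^ 2) * m - r = 0)
    (hnroot : 1 / 2 * sigma ^ 2 * n ^ 2 + (b - 1 / 2 * sigma ^ 2) * n - r = 0) : 1 < n := by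
  have hsum : 1 / 2 * sigma ^ 2 * (n + m) + (b - 1 / 2 * sigma ^ 2) = 0 := by
    have hne : n - m ≠ 0 := by linarith
    apply mul_left_cancel₀ hne
    linear_combination hnroot - hmroot
  have hone : 1 / 2 * sigma ^ 2 * ((n - 1) * (1 - m)) = r - b := by
    linear_combination (1 - n) * hsum + hnroot
  by_contra! h
  have h1 : (n - 1) * (1 - m) ≤ 0 :=
    mul_nonpos_of_nonpos_of_nonneg (by linarith) (by linarith)
  have h2 : 1 / 2 * sigma ^ 2 * ((n - 1) * (1 - m)) ≤ 0 :=
    mul_nonpos_of_nonneg_of_nonpos (by positivity) h1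
  linarith

lemma zbeta_eq {n K beta : ℝ} (hb2 : beta < 1) :
    zbeta n K beta = n * K * (1 - beta) / (n * (1 - beta) - (1 + beta)) := by
  have h : (1 - beta) ≠ 0 := by linarith
  have h' : n - (1 + beta) / (1 - beta) = (n * (1 - beta) - (1 + beta)) / (1 - beta) := by
    field_simp
  rw [zbeta, h', div_div_eq_mul_div]

lemma lt_zbeta {n K beta : ℝ} (hK : 0 < K) (hb1 : -1 < beta) (hbneg : beta < 0) (hn : 1 < n) :
    K < zbeta n K beta := by
  have hd : 0 < n * (1 - beta) - (1 + beta) := by nlinarith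
  rw [zbeta_eq (by linarith), lt_div_iff₀ hd]
  nlinarith

lemma zbeta_lt_zzero {n K beta : ℝ} (hK : 0 < K) (hbneg : beta < 0) (hn : 1 < n) :
    zbeta n K beta < zzero n K := by
  have hd : 0 < n * (1 - beta) - (1 + beta) := by nlinarith
  have hnK : 0 < n * K := by positivity
  rw [zbeta_eq (by linarith), zzero, div_lt_div_iff₀ hd (by linarith)]
  have := mul_neg_of_pos_of_neg hnK hbneg
  nlinarith

/-- The second linear factor `(1-m)x + mK = x - m (x - K)` does not vanish beyond `K`. -/
lemma linear_factor_pos {m K x : ℝ} (hK : 0 < K) (hm : m < 0) (hx : K < x) :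
    0 < (1 - m) * x + m * K := by
  nlinarith

lemma linear_factor_zbeta_nonneg {n m K beta : ℝ} (hK : 0 < K) (hbneg : beta < 0) (hn : 1 < n)
    (hconv : 0 ≤ (n - 1) * (1 - beta) - 2 * m * beta) :
    0 ≤ (n - 1) * (1 - m) * zbeta n K beta + n * m * K := by
  have hd : 0 < n * (1 - beta) - (1 + beta) := by nlinarith
  have h : (n - 1) * (1 - m) * zbeta n K beta + n * m * K
      = n * K * ((n - 1) * (1 - beta) - 2 * m * beta) / (n * (1 - beta) - (1 + beta)) := by
    rw [zbeta_eq (by linarith)]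
    field_simp
    ring
  rw [h]
  have : 0 ≤ n * K := by positivity
  exact div_nonneg (mul_nonneg this (by linarith)) hd.le

lemma Ffun_eq_zero_iff {n m beta K z x : ℝ} (hK : 0 < K) (hb1 : -1 < beta) (hbneg : beta < 0)
    (hm : m < 0) (hn : 1 < n) (hx : K < x) :
    Ffun n m beta K z x = 0 ↔ powerOfRoot n m beta K x = z ^ (n - m) := by
  have h1 : 0 < (n - m) * (1 + beta) := mul_pos (by linarith) (by linarith)
  have h2 : 0 < (-2 * n * beta) * ((1 - m) * x + m * K) :=
    mul_pos (by nlinarith) (linear_factor_pos hK hm hx)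
  have hF : Ffun n m beta K z x
      = (z ^ (n - m) * ((-2 * n * beta) * ((1 - m) * x + m * K))
        - (n * (1 - beta) - m * (1 + beta)) * ((n * K - (n - 1) * x) * x ^ (n - m)))
          / ((n - m) * (1 + beta)) := by
    rw [Ffun, Acoef, Bcoef]
    ring
  rw [hF, powerOfRoot, div_eq_zero_iff, div_eq_iff h2.ne', sub_eq_zero]
  constructor
  · rintro (h | h)
    · exact h.symm
    · exact absurd h h1.ne'
  · exact fun h => Or.inl h.symm

lemma powerOfRoot_zbeta {n m beta K : ℝ} (hK : 0 < K) (hb1 : -1 < beta) (hbneg : beta < 0)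
    (hm : m < 0) (hn : 1 < n) :
    powerOfRoot n m beta K (zbeta n K beta) = zbeta n K beta ^ (n - m) := by
  have h2 : 0 < (-2 * n * beta) * ((1 - m) * zbeta n K beta + m * K) :=
    mul_pos (by nlinarith) (linear_factor_pos hK hm (lt_zbeta hK hb1 hbneg hn))
  have hd : n * (1 - beta) - (1 + beta) ≠ 0 := by nlinarith
  have key : (n * (1 - beta) - m * (1 + beta)) * (n * K - (n - 1) * zbeta n K beta)
      = (-2 * n * beta) * ((1 - m) * zbeta n K beta + m * K) := by
    rw [zbeta_eq (by linarith)]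
    field_simp
    ring
  rw [powerOfRoot, div_eq_iff h2.ne', ← mul_assoc, key, mul_comm]

lemma powerOfRoot_pos {n m beta K x : ℝ} (hK : 0 < K) (hb1 : -1 < beta) (hbneg : beta < 0)
    (hm : m < 0) (hn : 1 < n) (hx : K < x) (hx0 : x < zzero n K) :
    0 < powerOfRoot n m beta K x := by
  have hxp : 0 < x := hK.trans hx
  rw [zzero, lt_div_iff₀ (by linarith)] at hx0
  refine div_pos (mul_pos ?_ (mul_pos (by linarith) (Real.rpow_pos_of_pos hxp _)))
    (mul_pos (by nlinarith) (linear_factor_pos hK hm hx))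
  nlinarith

/-- The numerator of `g'` factors as a negative constant times `x ^ (n-m-1)` times
`((n-1)(1-m)x + nmK)(x - K)`, and both brackets are positive to the right of `𝔷_β`. -/
lemma strictAntiOn_powerOfRoot {n m beta K : ℝ} (hK : 0 < K) (hb1 : -1 < beta)
    (hbneg : beta < 0) (hm : m < 0) (hn : 1 < n)
    (hconv : 0 ≤ (n - 1) * (1 - beta) - 2 * m * beta) :
    StrictAntiOn (powerOfRoot n m beta K) (Ici (zbeta n K beta)) := by
  have hKz := lt_zbeta hK hb1 hbneg hn
  have hC : 0 < n * (1 - beta) - m * (1 + beta) := by nlinarith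
  have hD : 0 < -2 * n * beta := by nlinarith
  have hderiv : ∀ x, K < x → HasDerivAt (powerOfRoot n m beta K)
      (-((n * (1 - beta) - m * (1 + beta)) * (-2 * n * beta) * (n - m) * x ^ (n - m - 1)
        * (((n - 1) * (1 - m) * x + n * m * K) * (x - K)))
        / ((-2 * n * beta) * ((1 - m) * x + m * K)) ^ 2) x := by
    intro x hx
    have hxp : 0 < x := hK.trans hx
    have hlin := linear_factor_pos hK hm hx
    have e1 : HasDerivAt (fun x : ℝ => n * K - (n - 1) * x) (-((n - 1) * 1)) x :=
      ((hasDerivAt_id x).const_mul (n - 1)).const_sub (n * K)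
    have e2 : HasDerivAt (fun x : ℝ => x ^ (n - m)) ((n - m) * x ^ (n - m - 1)) x :=
      Real.hasDerivAt_rpow_const (Or.inl hxp.ne')
    have e3 : HasDerivAt (fun x : ℝ => (-2 * n * beta) * ((1 - m) * x + m * K))
        ((-2 * n * beta) * ((1 - m) * 1)) x :=
      (((hasDerivAt_id x).const_mul (1 - m)).add_const (m * K)).const_mul (-2 * n * beta)
    have e := ((e1.mul e2).const_mul (n * (1 - beta) - m * (1 + beta))).div e3
      (mul_pos hD hlin).ne'
    refine e.congr_deriv ?_
    have hpow : x ^ (n - m) = x ^ (n - m - 1) * x := by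
      rw [← Real.rpow_add_one hxp.ne', sub_add_cancel]
    congr 1
    simp only [Pi.mul_apply]
    rw [hpow]
    ring
  refine strictAntiOn_of_deriv_neg (convex_Ici _)
    (fun x hx => (hderiv x (hKz.trans_le hx)).continuousAt.continuousWithinAt) ?_
  intro x hx
  rw [interior_Ici, mem_Ioi] at hx
  have hKx := hKz.trans hx
  rw [(hderiv x hKx).deriv]
  have hbr : 0 < (n - 1) * (1 - m) * x + n * m * K := by
    have h0 := linear_factor_zbeta_nonneg hK hbneg hn hconv
    have ha : 0 < (n - 1) * (1 - m) := mul_pos (by linarith) (by linarith)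
    have := mul_lt_mul_of_pos_left hx ha
    linarith
  have hpow : 0 < x ^ (n - m - 1) := Real.rpow_pos_of_pos (hK.trans hKx) _
  have hp : 0 < n - m := by linarith
  have hsub : 0 < x - K := by linarith
  have hlin := linear_factor_pos hK hm hKx
  exact div_neg_of_neg_of_pos (neg_neg_of_pos (by positivity)) (by positivity)

theorem stmt_11 (sigma b r K beta n m : ℝ)
    (hsigma : sigma ≠ 0) (hr : 0 < r) (hbr : b < r) (hK : 0 < K)
    (hb1 : -1 < beta) (hb2 : beta < 1) (hbne : beta ≠ 0)
    (hm : m < 0) (hn : 0 < n)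
    (hmroot : 1 / 2 * sigma ^ 2 * m ^ 2 + (b - 1 / 2 * sigma ^ 2) * m - r = 0)
    (hnroot : 1 / 2 * sigma ^ 2 * n ^ 2 + (b - 1 / 2 * sigma ^ 2) * n - r = 0)
    (hbneg : beta < 0)
    (hconv : 0 ≤ (n - 1) * (1 - beta) - 2 * m * beta)
    (alpha : ℝ → ℝ)
    (halpha : ∀ z ∈ Set.Ioo (0 : ℝ) (zbeta n K beta),
      alpha z ∈ Set.Ioo (zbeta n K beta) (zzero n K) ∧ Ffun n m beta K z (alpha z) = 0) :
    StrictAntiOn alpha (Set.Ioo (0 : ℝ) (zbeta n K beta)) ∧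
    Tendsto alpha (𝓝[>] (0 : ℝ)) (𝓝 (zzero n K)) ∧
    Tendsto alpha (𝓝[<] (zbeta n K beta)) (𝓝 (zbeta n K beta)) := by
  have hn1 : 1 < n := one_lt_of_roots hbr hm hn hmroot hnroot
  have hp : 0 < n - m := by linarith
  have hKz := lt_zbeta hK hb1 hbneg hn1
  have hzz := zbeta_lt_zzero hK hbneg hn1
  have hz0 : 0 < zbeta n K beta := hK.trans hKz
  have hanti := strictAntiOn_powerOfRoot hK hb1 hbneg hm hn1 hconv
  have hmem : ∀ z ∈ Ioo 0 (zbeta n K beta), alpha z ∈ Ici (zbeta n K beta) :=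
    fun z hz => (halpha z hz).1.1.le
  have heq : ∀ z ∈ Ioo 0 (zbeta n K beta),
      powerOfRoot n m beta K (alpha z) = z ^ (n - m) := fun z hz =>
    (Ffun_eq_zero_iff hK hb1 hbneg hm hn1 (hKz.trans (halpha z hz).1.1)).1 (halpha z hz).2
  have hright : ∀ᶠ z in 𝓝[>] (0 : ℝ), z ∈ Ioo 0 (zbeta n K beta) := Ioo_mem_nhdsGT hz0
  have hleft : ∀ᶠ z in 𝓝[<] (zbeta n K beta), z ∈ Ioo 0 (zbeta n K beta) := Ioo_mem_nhdsLT hz0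
  refine ⟨?_, ?_, ?_⟩
  · intro z hz w hw hzw
    rw [← hanti.lt_iff_gt (hmem z hz) (hmem w hw), heq z hz, heq w hw]
    exact Real.rpow_lt_rpow hz.1.le hzw hp
  · refine tendsto_order.2 ⟨fun a ha => ?_, fun a ha => ?_⟩
    · rcases le_or_gt a (zbeta n K beta) with h | h
      · filter_upwards [hright] with z hz using h.trans_lt (halpha z hz).1.1
      · have hlim : Tendsto (fun z : ℝ => z ^ (n - m)) (𝓝[>] 0) (𝓝 0) := by
          have := (Real.continuousAt_rpow_const 0 (n - m) (Or.inr hp.le)).tendsto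
          rw [Real.zero_rpow hp.ne'] at this
          exact this.mono_left nhdsWithin_le_nhds
        have hpos := powerOfRoot_pos hK hb1 hbneg hm hn1 (hKz.trans h) ha
        filter_upwards [hright, hlim.eventually_lt_const hpos] with z hz hlt
        rwa [← heq z hz, hanti.lt_iff_gt (hmem z hz) h.le] at hlt
    · filter_upwards [hright] with z hz using (halpha z hz).1.2.trans ha
  · refine tendsto_order.2 ⟨fun a ha => ?_, fun a ha => ?_⟩
    · filter_upwards [hleft] with z hz using ha.trans (halpha z hz).1.1
    · have hlim : Tendsto (fun z : ℝ => z ^ (n - m)) (𝓝[<] (zbeta n K beta))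
          (𝓝 (zbeta n K beta ^ (n - m))) :=
        (Real.continuousAt_rpow_const _ (n - m) (Or.inr hp.le)).tendsto.mono_left
          nhdsWithin_le_nhds
      have hga : powerOfRoot n m beta K a < zbeta n K beta ^ (n - m) := by
        rw [← powerOfRoot_zbeta hK hb1 hbneg hm hn1]
        exact hanti self_mem_Ici (mem_Ici.2 ha.le) ha
      filter_upwards [hleft, hlim.eventually_const_lt hga] with z hz hlt
      rwa [← heq z hz, hanti.lt_iff_gt (mem_Ici.2 ha.le) (hmem z hz)] at hlt
end
end

section
/- Suppose b > 0 and (n−1)(1−β) − 2mβ < 0 (this forces β ∈ (−1,0)). Then K < 𝔠·𝔷_c, and for each z ∈ (0, 𝔠·𝔷_c) there exists a unique point α(z) ∈ (𝔷_c, 𝔷_0) such that F(α(z);z) = 0; moreover F(x;z) < 0 for all x ∈ [𝔷_c, α(z)), F(x;z) > 0 for all x > α(z), and ∂F/∂x(x;z) > 0 for all x ≥ α(z). The function α is strictly decreasing on (0, 𝔠·𝔷_c), with lim_{z↓0} α(z) = 𝔷_0 and lim_{z↑𝔠·𝔷_c} α(z) = 𝔷_c. Furthermore, F(x;z) > 0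 for all z ∈ [𝔠·𝔷_c, 𝔷_c) and all x > 𝔷_c. -/
/-!
On the half-line where `(1 - m) x + m K > 0`, which contains `[K, ∞)`, one can factor
`F(x;z) = -2nβ / ((n-m)(1+β)) * ((1 - m) x + m K) * (z ^ (n-m) - g x)`
with a function `g = gAux` that does not depend on `z`. The hypotheses force `β < 0`, so the
prefactor is positive and the sign of `F(x;z)` is that of `z ^ (n-m) - g x`.

By Vieta's formulas `(n-1)(1-m) 𝔷_c = -n m K`, and the derivative of `g` turns out to be a positive
multiple of `-(x - K)(x - 𝔷_c)` (`hasDerivAt_gAux`). Hence `g` increases on `[K, 𝔷_c]` and decreases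
on `[𝔷_c, ∞)`; moreover `g 𝔷_c = (𝔠 𝔷_c) ^ (n-m)` (`gAux_zcrit`) and `g 𝔷_0 = 0`. So `α(z)` is the
preimage of `z ^ (n-m)` under the decreasing branch of `g`, and its monotonicity and limits are
those of the inverse of a continuous decreasing function (`exists_inverse_branch`). Finally
`K < 𝔠 𝔷_c` follows from `K ^ (n-m) < g K < g 𝔷_c`.
-/

open Set Filter Topology

noncomputable section

/-- The function `g` such that, where `(1 - m) x + m K > 0`, the equation `F(x;z) = 0` reads
`z ^ (n - m) = g x`. -/
def gAux (n m beta K x : ℝ) : ℝ :=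
  (n * (1 - beta) - m * (1 + beta)) / (-2 * n * beta) *
    ((n * K - (n - 1) * x) * x ^ (n - m) / ((1 - m) * x + m * K))

lemma Ffun_eq {n m beta K z x : ℝ} (hn : 0 < n) (hm : m < 0) (hb1 : -1 < beta) (hb0 : beta < 0)
    (hL : 0 < (1 - m) * x + m * K) :
    Ffun n m beta K z x = -2 * n * beta / ((n - m) * (1 + beta)) *
      (((1 - m) * x + m * K) * (z ^ (n - m) - gAux n m beta K x)) := by
  have h1 : n - m ≠ 0 := by linarith
  have h2 : 1 + beta ≠ 0 := by linarith
  have h3 := hL.ne'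
  have h4 := hb0.ne
  have h5 := hn.ne'
  unfold Ffun gAux Acoef Bcoef
  generalize z ^ (n - m) = u
  generalize x ^ (n - m) = v
  generalize hLL : (1 - m) * x + m * K = L at *
  have : (m - 1) * x - m * K = -L := by rw [← hLL]; ring
  rw [this]
  field_simp
  ring

/-- The numerator of the quotient rule factors over its roots `K` and `c`, thanks to Vieta's relation
`hc`. -/
lemma hasDerivAt_gAux {n m beta K c x : ℝ} (hx : 0 < x) (hL : 0 < (1 - m) * x + m * K)
    (hc : (n - 1) * (1 - m) * c = -(n * m * K)) :
    HasDerivAt (gAux n m beta K)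
      ((n * (1 - beta) - m * (1 + beta)) / (-2 * n * beta) *
        ((n - m) * x ^ (n - m - 1) * (-((n - 1) * (1 - m) * ((x - K) * (x - c))))
          / ((1 - m) * x + m * K) ^ 2)) x := by
  have h1 : HasDerivAt (fun x : ℝ => n * K - (n - 1) * x) (-(n - 1)) x := by
    simpa using ((hasDerivAt_id x).const_mul (n - 1)).const_sub (n * K)
  have h2 : HasDerivAt (fun x : ℝ => (1 - m) * x + m * K) (1 - m) x := by
    simpa using ((hasDerivAt_id x).const_mul (1 - m)).add_const (m * K)
  have h3 := Real.hasDerivAt_rpow_const (x := x) (p := n - m) (Or.inl hx.ne')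
  have h4 := (((h1.mul h3).div h2 hL.ne').const_mul
    ((n * (1 - beta) - m * (1 + beta)) / (-2 * n * beta)))
  refine h4.congr_deriv ?_
  congr 2
  have h5 : x ^ (n - m) = x ^ (n - m - 1) * x := by
    rw [← Real.rpow_add_one hx.ne']; congr 1; ring
  simp only [Pi.mul_apply]
  rw [h5]
  generalize x ^ (n - m - 1) = w
  linear_combination (-(w * (n - m) * (x - K))) * hc

/-- If `g` decreases continuously on `[a, ∞)` from `Z ^ d` at `a` to `0` at `b > a`, then
`g (α z) = z ^ d` has a solution branch on `(0, Z)` which decreases from `b` to `a`. -/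
lemma exists_inverse_branch {g : ℝ → ℝ} {a b d Z : ℝ} (hab : a < b) (hd : 0 < d) (hZ : 0 < Z)
    (hg : StrictAntiOn g (Ici a)) (hgc : ContinuousOn g (Icc a b)) (hgb : g b = 0)
    (hga : g a = Z ^ d) :
    ∃ alpha : ℝ → ℝ, (∀ z ∈ Ioo 0 Z, alpha z ∈ Ioo a b ∧ g (alpha z) = z ^ d) ∧
      StrictAntiOn alpha (Ioo 0 Z) ∧ Tendsto alpha (𝓝[>] 0) (𝓝 b) ∧
      Tendsto alpha (𝓝[<] Z) (𝓝 a) := by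
  have hex : ∀ z, ∃ y, z ∈ Ioo 0 Z → y ∈ Ioo a b ∧ g y = z ^ d := by
    intro z
    by_cases hz : z ∈ Ioo 0 Z
    · have hmem : z ^ d ∈ Ioo (g b) (g a) := by
        rw [hgb, hga]
        exact ⟨Real.rpow_pos_of_pos hz.1 d, Real.rpow_lt_rpow hz.1.le hz.2 hd⟩
      obtain ⟨y, hy, hy'⟩ := intermediate_value_Ioo' hab.le hgc hmem
      exact ⟨y, fun _ => ⟨hy, hy'⟩⟩
    · exact ⟨0, fun h => absurd h hz⟩
  choose alpha hal using hex
  have hcont : Continuous fun z : ℝ => z ^ d := Real.continuous_rpow_const hd.le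
  have ev0 : ∀ᶠ z in 𝓝[>] (0 : ℝ), z ∈ Ioo 0 Z := Ioo_mem_nhdsGT hZ
  have evZ : ∀ᶠ z in 𝓝[<] Z, z ∈ Ioo 0 Z := Ioo_mem_nhdsLT hZ
  refine ⟨alpha, hal, ?_, ?_, ?_⟩
  · intro z hz w hw hzw
    obtain ⟨h1, h2⟩ := hal z hz
    obtain ⟨h3, h4⟩ := hal w hw
    refine (hg.lt_iff_gt (mem_Ici.2 h1.1.le) (mem_Ici.2 h3.1.le)).1 ?_
    rw [h2, h4]
    exact Real.rpow_lt_rpow hz.1.le hzw hd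
  · refine tendsto_order.2 ⟨fun y hy => ?_, fun y hy => ?_⟩
    · have hpos : 0 < g (max y a) := by
        rw [← hgb]
        exact hg (mem_Ici.2 (le_max_right _ _)) (mem_Ici.2 hab.le) (max_lt hy hab)
      have hev : ∀ᶠ z in 𝓝[>] (0 : ℝ), z ^ d < g (max y a) := by
        refine (hcont.tendsto 0).mono_left nhdsWithin_le_nhds |>.eventually_lt_const ?_
        rwa [Real.zero_rpow hd.ne']
      filter_upwards [ev0, hev] with z hz hz'
      obtain ⟨h1, h2⟩ := hal z hz
      rw [← h2] at hz'
      exact (le_max_left _ _).trans_lt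
        ((hg.lt_iff_gt (mem_Ici.2 h1.1.le) (mem_Ici.2 (le_max_right _ _))).1 hz')
    · filter_upwards [ev0] with z hz
      exact (hal z hz).1.2.trans hy
  · refine tendsto_order.2 ⟨fun y hy => ?_, fun y hy => ?_⟩
    · filter_upwards [evZ] with z hz
      exact hy.trans (hal z hz).1.1
    · have hlt : g y < Z ^ d := by
        rw [← hga]
        exact hg self_mem_Ici (mem_Ici.2 hy.le) hy
      have hev : ∀ᶠ z in 𝓝[<] Z, g y < z ^ d :=
        ((hcont.tendsto Z).mono_left nhdsWithin_le_nhds).eventually_const_lt hlt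
      filter_upwards [evZ, hev] with z hz hlt_z
      obtain ⟨h1, h2⟩ := hal z hz
      rw [← h2] at hlt_z
      exact (hg.lt_iff_gt (mem_Ici.2 hy.le) (mem_Ici.2 h1.1.le)).1 hlt_z

/-- The value of `g` at the point `c` where it is maximal on `[K, ∞)`, that is, at `𝔷_c`; this
identity explains the constant `𝔠`. -/
lemma gAux_zcrit {n m beta K c : ℝ} (hn1 : 1 < n) (hm : m < 0) (hb1 : -1 < beta) (hb0 : beta < 0)
    (hK : 0 < K) (hc0 : 0 < c) (hc : (n - 1) * (1 - m) * c = -(n * m * K)) :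
    0 < gothC n m beta ∧ gAux n m beta K c = (gothC n m beta * c) ^ (n - m) := by
  have hd : n - m ≠ 0 := by linarith
  have hP : 0 < n * (1 - beta) - m * (1 + beta) := by nlinarith
  have hq : 0 < m * (m - 1) * (-beta) :=
    mul_pos (mul_pos_of_neg_of_neg hm (by linarith)) (by linarith)
  have hbase : 0 < -((n - 1) * (n * (1 - beta) - m * (1 + beta))) / (2 * m * (m - 1) * beta) := by
    apply div_pos_of_neg_of_neg
    · have := mul_pos (sub_pos.2 hn1) hP
      linarith
    · linarith
  have hpos : 0 < gothC n m beta := Real.rpow_pos_of_pos hbase _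
  refine ⟨hpos, ?_⟩
  rw [Real.mul_rpow hpos.le hc0.le]
  have h1 : gothC n m beta ^ (n - m) =
      -((n - 1) * (n * (1 - beta) - m * (1 + beta))) / (2 * m * (m - 1) * beta) := by
    unfold gothC
    rw [← Real.rpow_mul hbase.le, one_div_mul_cancel hd, Real.rpow_one]
  rw [h1]
  unfold gAux
  generalize n * (1 - beta) - m * (1 + beta) = P
  generalize c ^ (n - m) = v
  have hn1' : n - 1 ≠ 0 := by linarith
  have hm1 : 1 - m ≠ 0 := by linarith
  have hm1' : m - 1 ≠ 0 := by linarith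
  have hn0 : n ≠ 0 := by linarith
  have hN : n * K - (n - 1) * c = n * K / (1 - m) := by
    field_simp
    linear_combination -hc
  have hL : (1 - m) * c + m * K = -(m * K) / (n - 1) := by
    field_simp
    linear_combination hc
  rw [hN, hL]
  have := hm.ne
  have := hb0.ne
  have := hK.ne'
  have h2 : m - 1 = -(1 - m) := by ring
  rw [h2]
  field_simp

theorem stmt_12 (sigma b r K beta n m : ℝ)
    (hsigma : sigma ≠ 0) (hr : 0 < r) (hbr : b < r) (hK : 0 < K)
    (hb1 : -1 < beta) (hb2 : beta < 1) (hbne : beta ≠ 0)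
    (hm : m < 0) (hn : 0 < n)
    (hmroot : 1 / 2 * sigma ^ 2 * m ^ 2 + (b - 1 / 2 * sigma ^ 2) * m - r = 0)
    (hnroot : 1 / 2 * sigma ^ 2 * n ^ 2 + (b - 1 / 2 * sigma ^ 2) * n - r = 0)
    (hb : 0 < b)
    (hconv : (n - 1) * (1 - beta) - 2 * m * beta < 0) :
    K < gothC n m beta * zcrit r b K ∧
    (∃ alpha : ℝ → ℝ,
      (∀ z ∈ Set.Ioo (0 : ℝ) (gothC n m beta * zcrit r b K),
        alpha z ∈ Set.Ioo (zcrit r b K) (zzero n K) ∧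
        Ffun n m beta K z (alpha z) = 0 ∧
        (∀ x ∈ Set.Ioo (zcrit r b K) (zzero n K), Ffun n m beta K z x = 0 → x = alpha z) ∧
        (∀ x, zcrit r b K ≤ x → x < alpha z → Ffun n m beta K z x < 0) ∧
        (∀ x, alpha z < x → 0 < Ffun n m beta K z x) ∧
        (∀ x, alpha z ≤ x → 0 < deriv (Ffun n m beta K z) x)) ∧
      StrictAntiOn alpha (Set.Ioo (0 : ℝ) (gothC n m beta * zcrit r b K)) ∧
      Tendsto alpha (𝓝[>] (0 : ℝ)) (𝓝 (zzero n K)) ∧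
      Tendsto alpha (𝓝[<] (gothC n m beta * zcrit r b K)) (𝓝 (zcrit r b K))) ∧
    (∀ z ∈ Set.Ico (gothC n m beta * zcrit r b K) (zcrit r b K),
      ∀ x, zcrit r b K < x → 0 < Ffun n m beta K z x) := by
  have hs2 : 0 < sigma ^ 2 := by positivity
  have hnm : n - m ≠ 0 := by linarith
  have hd : 0 < n - m := by linarith
  -- Vieta's formulas, obtained by eliminating between the two root equations.
  have hsum : 1 / 2 * sigma ^ 2 * (n + m) + (b - 1 / 2 * sigma ^ 2) = 0 := by
    apply mul_left_cancel₀ hnm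
    linear_combination hnroot - hmroot
  have hprod : 1 / 2 * sigma ^ 2 * (n * m) = -r := by
    linear_combination n * hsum - hnroot
  have hquad : 1 / 2 * sigma ^ 2 * ((n - 1) * (1 - m)) = r - b := by
    linear_combination hsum - hprod
  have hn1 : 1 < n := by
    by_contra! h
    have : (n - 1) * (1 - m) ≤ 0 := mul_nonpos_of_nonpos_of_nonneg (by linarith) (by linarith)
    nlinarith
  have hb0 : beta < 0 := by
    by_contra! h
    have h1 : 0 < (n - 1) * (1 - beta) := mul_pos (by linarith) (by linarith)
    have h2 : m * beta ≤ 0 := mul_nonpos_of_nonpos_of_nonneg hm.le h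
    linarith
  have hrb : 0 < r - b := by linarith
  have hq : 0 < (n - 1) * (1 - m) := mul_pos (by linarith) (by linarith)
  have hc : (n - 1) * (1 - m) * zcrit r b K = -(n * m * K) := by
    have hz : zcrit r b K * (r - b) = r * K := div_mul_cancel₀ _ hrb.ne'
    apply mul_left_cancel₀ (show (1 / 2 * sigma ^ 2) ≠ 0 by positivity)
    linear_combination zcrit r b K * hquad + hz + K * hprod
  have hKc : K < zcrit r b K := by
    unfold zcrit
    rw [lt_div_iff₀ hrb]
    nlinarith
  have hzz : (n - 1) * zzero n K = n * K := mul_div_cancel₀ _ (by linarith)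
  have hc0 : 0 < zcrit r b K := hK.trans hKc
  obtain ⟨hC0, hgc⟩ := gAux_zcrit hn1 hm hb1 hb0 hK hc0 hc
  generalize zcrit r b K = c at *
  generalize gothC n m beta = C at *
  generalize zzero n K = y at *
  have hcy : c < y := by
    have h1 : (n - 1) * (1 - m) * c < (n - 1) * (1 - m) * y := by
      have : (n - 1) * (1 - m) * y = n * K * (1 - m) := by linear_combination (1 - m) * hzz
      rw [hc, this]
      nlinarith [mul_pos hn hK]
    exact lt_of_mul_lt_mul_left h1 hq.le
  have hLpos : ∀ x, K ≤ x → 0 < (1 - m) * x + m * K := fun x hx => by nlinarith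
  have hP : 0 < n * (1 - beta) - m * (1 + beta) := by nlinarith
  have hnb : 0 < -2 * n * beta := by nlinarith
  have hder := fun x (hx : K ≤ x) =>
    hasDerivAt_gAux (beta := beta) (hK.trans_le hx) (hLpos x hx) hc
  have hcont : ContinuousOn (gAux n m beta K) (Ici K) := fun x hx =>
    (hder x hx).continuousAt.continuousWithinAt
  have hneg : ∀ x, c < x → deriv (gAux n m beta K) x < 0 := by
    intro x hx
    have hKx : K < x := hKc.trans hx
    rw [(hder x hKx.le).deriv]
    have h1 : 0 < x ^ (n - m - 1) := Real.rpow_pos_of_pos (hK.trans hKx) _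
    have h2 := hLpos x hKx.le
    have h3 : 0 < (n - 1) * (1 - m) * ((x - K) * (x - c)) :=
      mul_pos hq (mul_pos (by linarith) (by linarith))
    refine mul_neg_of_pos_of_neg (div_pos hP hnb) (div_neg_of_neg_of_pos ?_ (by positivity))
    exact mul_neg_of_pos_of_neg (mul_pos hd h1) (by linarith)
  have hanti : StrictAntiOn (gAux n m beta K) (Ici c) := by
    refine strictAntiOn_of_deriv_neg (convex_Ici c) (hcont.mono (Ici_subset_Ici.2 hKc.le)) ?_
    intro x hx
    rw [interior_Ici] at hx
    exact hneg x hx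
  have hmono : StrictMonoOn (gAux n m beta K) (Icc K c) := by
    refine strictMonoOn_of_deriv_pos (convex_Icc K c) (hcont.mono Icc_subset_Ici_self) ?_
    intro x hx
    rw [interior_Icc] at hx
    rw [(hder x hx.1.le).deriv]
    have h1 : 0 < x ^ (n - m - 1) := Real.rpow_pos_of_pos (hK.trans hx.1) _
    have h2 := hLpos x hx.1.le
    have h3 : (n - 1) * (1 - m) * ((x - K) * (x - c)) < 0 :=
      mul_neg_of_pos_of_neg hq
        (mul_neg_of_pos_of_neg (by linarith [hx.1]) (by linarith [hx.2]))
    refine mul_pos (div_pos hP hnb) (div_pos ?_ (by positivity))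
    exact mul_pos (mul_pos hd h1) (by linarith)
  have hpre : 0 < -2 * n * beta / ((n - m) * (1 + beta)) :=
    div_pos hnb (mul_pos hd (by linarith))
  have hF := fun z x (hx : K ≤ x) => Ffun_eq (z := z) hn hm hb1 hb0 (hLpos x hx)
  have hgy : gAux n m beta K y = 0 := by
    unfold gAux
    rw [hzz]
    simp
  have hFpos : ∀ z x, K ≤ x → gAux n m beta K x < z ^ (n - m) → 0 < Ffun n m beta K z x := by
    intro z x hx h
    rw [hF z x hx]
    exact mul_pos hpre (mul_pos (hLpos x hx) (sub_pos.2 h))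
  refine ⟨?_, ?_, ?_⟩
  · have hgK : gAux n m beta K K =
        (n * (1 - beta) - m * (1 + beta)) / (-2 * n * beta) * K ^ (n - m) := by
      unfold gAux
      have h1 : n * K - (n - 1) * K = K := by ring
      have h2 : (1 - m) * K + m * K = K := by ring
      rw [h1, h2, mul_div_cancel_left₀ _ hK.ne']
    have h1 : 1 < (n * (1 - beta) - m * (1 + beta)) / (-2 * n * beta) := by
      rw [one_lt_div hnb]
      have : 0 < (n - m) * (1 + beta) := mul_pos hd (by linarith)
      linarith
    have h2 : gAux n m beta K K < gAux n m beta K c :=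
      hmono (left_mem_Icc.2 hKc.le) (right_mem_Icc.2 hKc.le) hKc
    rw [hgc, hgK] at h2
    have h3 : 0 < K ^ (n - m) := Real.rpow_pos_of_pos hK _
    refine (Real.rpow_lt_rpow_iff hK.le (mul_pos hC0 hc0).le hd).1 (lt_trans ?_ h2)
    exact lt_mul_of_one_lt_left h3 h1
  · obtain ⟨alpha, hal, hmon, hlim0, hlimc⟩ :=
      exists_inverse_branch hcy hd (mul_pos hC0 hc0) hanti
        (hcont.mono (Icc_subset_Ici_self.trans (Ici_subset_Ici.2 hKc.le))) hgy hgc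
    refine ⟨alpha, fun z hz => ?_, hmon, hlim0, hlimc⟩
    obtain ⟨hmem, hval⟩ := hal z hz
    have hKa : K < alpha z := hKc.trans hmem.1
    refine ⟨hmem, ?_, ?_, ?_, ?_, ?_⟩
    · rw [hF z _ hKa.le, hval]
      simp
    · intro x hx hFx
      have hKx : K ≤ x := (hKc.trans hx.1).le
      rw [hF z x hKx] at hFx
      have h1 := (mul_eq_zero.1 ((mul_eq_zero.1 hFx).resolve_left hpre.ne')).resolve_left
        (hLpos x hKx).ne'
      refine hanti.injOn (mem_Ici.2 hx.1.le) (mem_Ici.2 hmem.1.le) ?_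
      linarith
    · intro x hx hxa
      have hlt := hanti (mem_Ici.2 hx) (mem_Ici.2 hmem.1.le) hxa
      rw [hval] at hlt
      rw [hF z x (hKc.le.trans hx)]
      exact mul_neg_of_pos_of_neg hpre
        (mul_neg_of_pos_of_neg (hLpos x (hKc.le.trans hx)) (sub_neg.2 hlt))
    · intro x hx
      have hlt := hanti (mem_Ici.2 hmem.1.le) (mem_Ici.2 (hmem.1.trans hx).le) hx
      rw [hval] at hlt
      exact hFpos z x (hKa.trans hx).le hlt
    · intro x hx
      have hcx : c < x := hmem.1.trans_le hx
      have hKx : K < x := hKc.trans hcx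
      have hle : gAux n m beta K x ≤ z ^ (n - m) := by
        rw [← hval]
        exact hanti.antitoneOn (mem_Ici.2 hmem.1.le) (mem_Ici.2 hcx.le) hx
      have heq : Ffun n m beta K z =ᶠ[𝓝 x] fun x => -2 * n * beta / ((n - m) * (1 + beta)) *
          (((1 - m) * x + m * K) * (z ^ (n - m) - gAux n m beta K x)) := by
        filter_upwards [Ioi_mem_nhds hKx] with w hw
        exact hF z w (mem_Ioi.1 hw).le
      have hdL : HasDerivAt (fun x : ℝ => (1 - m) * x + m * K) (1 - m) x := by
        simpa using ((hasDerivAt_id x).const_mul (1 - m)).add_const (m * K)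
      have hdg := (hder x hKx.le).differentiableAt.hasDerivAt.const_sub (z ^ (n - m))
      have hdF := (hdL.mul hdg).const_mul (-2 * n * beta / ((n - m) * (1 + beta)))
      have hdF' := (hdF.congr_of_eventuallyEq heq).deriv
      rw [hdF']
      refine mul_pos hpre (add_pos_of_nonneg_of_pos ?_ ?_)
      · exact mul_nonneg (by linarith) (sub_nonneg.2 hle)
      · exact mul_pos (hLpos x hKx.le) (neg_pos.2 (hneg x hcx))
  · intro z hz x hx
    refine hFpos z x (hKc.trans hx).le ?_
    calc gAux n m beta K x < gAux n m beta K c := hanti self_mem_Ici (mem_Ici.2 hx.le) hx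
      _ = (C * c) ^ (n - m) := hgc
      _ ≤ z ^ (n - m) := Real.rpow_le_rpow (mul_pos hC0 hc0).le hz.1 hd.le
end
end
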